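/- Let P be a positively oriented simple polygon with vertex sequence p : ZMod m → ℝ², and let r = p i be a reflex vertex of P. Then there exists a point q on the boundary of P that is not a vertex of P, such that the open segment between r and q is contained in the open bounded region of P, and the segment rq splits P into two simple polygons P₁ and P₂ (whose boundaries are the segment rq together with the two boundary arcs of P between r and q, where the edge of P containing q is subdivided at q) satisfying: every reflex vertex of P₁ and of P₂ is a reflex vertex of P, both P₁ and P₂ have strictly fewer reflex vertices than P, and r and q are convex vertices of both P₁ and P₂. -/

import Mathlib

open Set

noncomputable section

/-- A point in the plane. -/
abbrev Pt := ℝ × ℝ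

/-- Cross product of two plane vectors. -/
def cross (u w : Pt) : ℝ := u.1 * w.2 - u.2 * w.1

/-- A simple polygon on `m` vertices: an injective vertex sequence indexed by `ZMod m`
such that consecutive boundary edges meet exactly in their common endpoint and
non-consecutive boundary edges are disjoint. -/
structure SimplePolygon (m : ℕ) where
  p : ZMod m → Pt
  inj : Function.Injective p
  consec : ∀ i : ZMod m,
    segment ℝ (p i) (p (i + 1)) ∩ segment ℝ (p (i + 1)) (p (i + 1 + 1)) = {p (i + 1)}
  disj : ∀ i j : ZMod m, i ≠ j → i + 1 ≠ j → j + 1 ≠ i →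
    segment ℝ (p i) (p (i + 1)) ∩ segment ℝ (p j) (p (j + 1)) = ∅

namespace SimplePolygon

variable {m : ℕ} (P : SimplePolygon m)

/-- The `i`-th closed boundary edge. -/
def edge (i : ZMod m) : Set Pt := segment ℝ (P.p i) (P.p (i + 1))

/-- The boundary of the polygon: the union of its edges. -/
def boundary : Set Pt := ⋃ i : ZMod m, P.edge i

/-- The open bounded region enclosed by the polygon: the union of the bounded
connected components of the complement of the boundary. -/
def openRegion : Set Pt :=
  {x | x ∉ P.boundary ∧ Bornology.IsBounded (connectedComponentIn P.boundaryᶜ x)}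

/-- The set of vertices of the polygon. -/
def vertexSet : Set Pt := Set.range P.p

/-- The signed area of the polygon (shoelace formula). -/
def signedArea : ℝ :=
  (1 / 2) * ∑ i ∈ Finset.range m,
    ((P.p (i : ZMod m)).1 * (P.p ((i : ZMod m) + 1)).2
      - (P.p ((i : ZMod m) + 1)).1 * (P.p (i : ZMod m)).2)

/-- The polygon is positively (counterclockwise) oriented. -/
def PosOriented : Prop := 0 < P.signedArea

/-- For a positively oriented polygon: the vertex `p i` is reflex. -/
def IsReflex (i : ZMod m) : Prop :=
  cross (P.p i - P.p (i - 1)) (P.p (i + 1) - P.p i) < 0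

/-- The set of reflex vertices (as points of the plane). -/
def reflexSet : Set Pt := {x | ∃ i : ZMod m, P.IsReflex i ∧ x = P.p i}

end SimplePolygon

/-!
The winding number of a simple polygon is locally constant off the boundary, and crossing an edge
from right to left raises it by one. Comparing neighbouring edges around their common vertex, it
equals some `n + 1` just to the left and `n` just to the right of *every* edge. A ray from a
generic point towards an edge first hits the boundary inside an edge, so these are almost
everywhere the only two values. One of them is `0`, the value far away, so `n` is `0` or `-1`. The
integral of the winding number is the signed area, so a polygon is positively oriented exactly
when `n = 0`.

Shoot a ray from the reflex vertex `r` into the interior, in a generic direction that makes `r`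
convex on both sides, up to the first point `q` of the boundary. The winding number is `1` along
the open chord, so the chord runs inside the polygon, and `r` lies to the left of the edge through
`q`. The winding numbers of the two pieces add up to that of the polygon. On the two sides of the
chord they equal `n₁ + 1, n₂` and `n₁, n₂ + 1`, hence `n₁ + n₂ + 1 = 1` and both pieces are
positively oriented.
-/

open scoped Topology ComplexConjugate

namespace Pt

lemma cross_add_right (u v w : Pt) : cross u (v + w) = cross u v + cross u w := by
  simp only [cross, Prod.fst_add, Prod.snd_add]; ring

lemma cross_neg_left (u w : Pt) : cross (-u) w = -cross u w := by
  simp only [cross, Prod.fst_neg, Prod.snd_neg]; ring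

lemma cross_neg_right (u w : Pt) : cross u (-w) = -cross u w := by
  simp only [cross, Prod.fst_neg, Prod.snd_neg]; ring

lemma cross_sub_right (u v w : Pt) : cross u (v - w) = cross u v - cross u w := by
  simp only [cross, Prod.fst_sub, Prod.snd_sub]; ring

lemma cross_smul_left (t : ℝ) (u w : Pt) : cross (t • u) w = t * cross u w := by
  simp only [cross, Prod.smul_fst, Prod.smul_snd, smul_eq_mul]; ring

lemma cross_smul_right (t : ℝ) (u w : Pt) : cross u (t • w) = t * cross u w := by
  simp only [cross, Prod.smul_fst, Prod.smul_snd, smul_eq_mul]; ring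

lemma cross_self (u : Pt) : cross u u = 0 := by
  simp only [cross]; ring

lemma cross_swap (u w : Pt) : cross w u = -cross u w := by
  simp only [cross]; ring

/-- The plane as the complex line, so that angles become arguments. -/
def toComplex : Pt ≃L[ℝ] ℂ := Complex.equivRealProdCLM.symm

@[simp] lemma toComplex_re (u : Pt) : (toComplex u).re = u.1 := rfl

@[simp] lemma toComplex_im (u : Pt) : (toComplex u).im = u.2 := rfl

/-- The complex number `conj (a - X) * (b - X)`, whose argument is the angle `a X b`, whose real
part is the scalar product of `a - X` and `b - X`, and whose imaginary part is their cross
product. -/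
def conjMul (X a b : Pt) : ℂ := conj (toComplex (a - X)) * toComplex (b - X)

lemma conjMul_re (X a b : Pt) :
    (conjMul X a b).re = (a.1 - X.1) * (b.1 - X.1) + (a.2 - X.2) * (b.2 - X.2) := by
  simp [conjMul]; ring

lemma conjMul_im (X a b : Pt) : (conjMul X a b).im = cross (a - X) (b - X) := by
  simp [conjMul, cross]; ring

lemma mem_segment_of_cross_eq_zero {X a b : Pt} (h : cross (a - X) (b - X) = 0)
    (hdot : (conjMul X a b).re ≤ 0) : X ∈ segment ℝ a b := by
  rw [conjMul_re] at hdot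
  rcases eq_or_ne X a with rfl | hXa
  · exact left_mem_segment ℝ X b
  simp only [cross, Prod.fst_sub, Prod.snd_sub] at h
  set s := (a.1 - X.1) ^ 2 + (a.2 - X.2) ^ 2 with hs
  set d := (a.1 - X.1) * (b.1 - X.1) + (a.2 - X.2) * (b.2 - X.2) with hd
  have hs_pos : 0 < s := by
    by_contra! hs_nonpos
    exact hXa (Prod.ext (by nlinarith [sq_nonneg (a.2 - X.2)])
      (by nlinarith [sq_nonneg (a.1 - X.1)]))
  have hsum : 0 < -d + s := by linarith
  refine ⟨-d / (-d + s), s / (-d + s), div_nonneg (by linarith) hsum.le,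
    div_nonneg hs_pos.le hsum.le, by rw [← add_div, div_self hsum.ne'], Prod.ext ?_ ?_⟩
  · simp only [Prod.fst_add, Prod.smul_fst, smul_eq_mul]
    field_simp
    rw [hs, hd]
    linear_combination (-(a.2 - X.2)) * h
  · simp only [Prod.snd_add, Prod.smul_snd, smul_eq_mul]
    field_simp
    rw [hs, hd]
    linear_combination (a.1 - X.1) * h

lemma conjMul_mem_slitPlane {X a b : Pt} (h : X ∉ segment ℝ a b) :
    conjMul X a b ∈ Complex.slitPlane := by
  rw [Complex.mem_slitPlane_iff, conjMul_im]
  by_contra! hslit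
  exact h (mem_segment_of_cross_eq_zero hslit.2 hslit.1)

/-- The signed angle in `(-π, π]` under which the oriented segment from `a` to `b` is seen
from `X`. -/
def signedAngle (X a b : Pt) : ℝ := (conjMul X a b).arg

lemma continuousAt_signedAngle {X a b : Pt} (h : X ∉ segment ℝ a b) :
    ContinuousAt (fun Y ↦ signedAngle Y a b) X := by
  have hcont : Continuous fun Y ↦ conjMul Y a b := by unfold conjMul; fun_prop
  exact ContinuousAt.comp (f := fun Y ↦ conjMul Y a b)
    (Complex.continuousAt_arg (conjMul_mem_slitPlane h)) hcont.continuousAt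

lemma signedAngle_pos {X a b : Pt} (h : 0 < cross (a - X) (b - X)) : 0 < signedAngle X a b := by
  rw [← conjMul_im] at h
  refine lt_of_le_of_ne (Complex.arg_nonneg_iff.2 h.le) fun h0 ↦ ?_
  exact h.ne' (Complex.arg_eq_zero_iff.1 h0.symm).2

lemma signedAngle_neg {X a b : Pt} (h : cross (a - X) (b - X) < 0) : signedAngle X a b < 0 := by
  rwa [signedAngle, Complex.arg_neg_iff, conjMul_im]

lemma abs_signedAngle_lt_pi {X a b : Pt} (h : X ∉ segment ℝ a b) : |signedAngle X a b| < Real.pi :=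
  abs_lt.2 ⟨Complex.neg_pi_lt_arg _, lt_of_le_of_ne (Complex.arg_le_pi _)
    (Complex.mem_slitPlane_iff_arg.1 (conjMul_mem_slitPlane h)).1⟩

lemma signedAngle_coe {X a b : Pt} {c : ℂ} (hc : c ≠ 0) (ha : a ≠ X) (hb : b ≠ X) :
    (signedAngle X a b : Real.Angle) =
      ((c * toComplex (b - X)).arg - (c * toComplex (a - X)).arg : ℝ) := by
  have ha' : toComplex (a - X) ≠ 0 := by simpa [sub_eq_zero] using ha
  have hb' : toComplex (b - X) ≠ 0 := by simpa [sub_eq_zero] using hb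
  rw [Real.Angle.coe_sub, Complex.arg_mul_coe_angle hc ha', Complex.arg_mul_coe_angle hc hb',
    signedAngle, conjMul, Complex.arg_mul_coe_angle ((map_ne_zero _).2 ha') hb',
    Complex.arg_conj_coe_angle]
  abel

lemma eq_of_angle_coe_eq {x y : ℝ} (h : (x : Real.Angle) = y) (hxy : |x - y| < 2 * Real.pi) :
    x = y := by
  obtain ⟨k, hk⟩ := Real.Angle.angle_eq_iff_two_pi_dvd_sub.1 h
  rw [hk, abs_mul, abs_of_pos Real.two_pi_pos, mul_lt_iff_lt_one_right Real.two_pi_pos,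
    ← Int.cast_abs, ← Int.cast_one, Int.cast_lt, Int.abs_lt_one_iff] at hxy
  rw [hxy] at hk
  simpa [sub_eq_zero] using hk

lemma signedAngle_eq_arg_sub_arg {X a b : Pt} {c : ℂ} (ha : 0 < (c * toComplex (a - X)).re)
    (hb : 0 < (c * toComplex (b - X)).re) :
    signedAngle X a b = (c * toComplex (b - X)).arg - (c * toComplex (a - X)).arg := by
  have hc : c ≠ 0 := by rintro rfl; simp at ha
  have haX : a ≠ X := by rintro rfl; simp at ha
  have hbX : b ≠ X := by rintro rfl; simp at hb
  refine eq_of_angle_coe_eq (signedAngle_coe hc haX hbX) (abs_lt.2 ?_)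
  have harg := abs_lt.1 (Complex.abs_arg_lt_pi_div_two_iff.2 (Or.inl ha))
  have hbrg := abs_lt.1 (Complex.abs_arg_lt_pi_div_two_iff.2 (Or.inl hb))
  have hlower : -Real.pi < signedAngle X a b := Complex.neg_pi_lt_arg _
  have hupper : signedAngle X a b ≤ Real.pi := Complex.arg_le_pi _
  constructor <;> linarith

lemma exists_re_pos_of_notMem {K : Set Pt} (hK : Convex ℝ K) (hK' : IsClosed K) {X : Pt}
    (hX : X ∉ K) : ∃ c : ℂ, ∀ y ∈ K, 0 < (c * toComplex (y - X)).re := by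
  obtain ⟨f, s, hfX, hfK⟩ := geometric_hahn_banach_point_closed hK hK' hX
  refine ⟨⟨f (1, 0), -f (0, 1)⟩, fun y hy ↦ ?_⟩
  have hf (u : Pt) : f u = u.1 * f (1, 0) + u.2 * f (0, 1) := by
    conv_lhs => rw [show u = u.1 • (1, 0) + u.2 • (0, 1) by ext <;> simp]
    simp only [map_add, map_smul, smul_eq_mul]
  have hpos : 0 < f (y - X) := by rw [map_sub]; linarith [hfK y hy]
  rw [hf] at hpos
  simp only [Complex.mul_re, toComplex_re, toComplex_im]
  linarith

lemma isClosed_segment (a b : Pt) : IsClosed (segment ℝ a b) := by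
  rw [← convexHull_pair]
  exact Set.Finite.isClosed_convexHull ℝ (Set.toFinite {a, b})

lemma signedAngle_swap {X a b : Pt} (h : X ∉ segment ℝ a b) :
    signedAngle X b a = -signedAngle X a b := by
  obtain ⟨c, hc⟩ := exists_re_pos_of_notMem (convex_segment a b) (isClosed_segment a b) h
  have ha := hc a (left_mem_segment ℝ a b)
  have hb := hc b (right_mem_segment ℝ a b)
  rw [signedAngle_eq_arg_sub_arg ha hb, signedAngle_eq_arg_sub_arg hb ha, neg_sub]

lemma signedAngle_add {X a b q : Pt} (hq : q ∈ segment ℝ a b) (h : X ∉ segment ℝ a b) :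
    signedAngle X a q + signedAngle X q b = signedAngle X a b := by
  obtain ⟨c, hc⟩ := exists_re_pos_of_notMem (convex_segment a b) (isClosed_segment a b) h
  have ha := hc a (left_mem_segment ℝ a b)
  have hb := hc b (right_mem_segment ℝ a b)
  rw [signedAngle_eq_arg_sub_arg ha (hc q hq), signedAngle_eq_arg_sub_arg (hc q hq) hb,
    signedAngle_eq_arg_sub_arg ha hb]
  ring

lemma conjMul_im_eq_cross (X a b : Pt) : (conjMul X a b).im = cross (b - a) (X - a) := by
  rw [conjMul_im]; simp only [cross, Prod.fst_sub, Prod.snd_sub]; ring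

lemma conjMul_re_neg {z a b : Pt} (hab : a ≠ b) (hz : z ∈ openSegment ℝ a b) :
    (conjMul z a b).re < 0 := by
  obtain ⟨s, t, hs, ht, hst, rfl⟩ := hz
  have hpos : 0 < s * t * ((b.1 - a.1) ^ 2 + (b.2 - a.2) ^ 2) := by
    refine mul_pos (mul_pos hs ht) ?_
    by_contra! h
    exact hab (Prod.ext (by nlinarith [sq_nonneg (b.2 - a.2)])
      (by nlinarith [sq_nonneg (b.1 - a.1)]))
  rw [conjMul_re]
  obtain rfl : s = 1 - t := by linarith
  simp only [Prod.fst_add, Prod.snd_add, Prod.smul_fst, Prod.smul_snd, smul_eq_mul]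
  linarith

lemma cross_sub_eq_zero_of_mem_segment {z a b : Pt} (hz : z ∈ segment ℝ a b) :
    cross (b - a) (z - a) = 0 := by
  rw [segment_eq_image'] at hz
  obtain ⟨t, -, rfl⟩ := hz
  rw [add_sub_cancel_left, cross_smul_right, cross_self, mul_zero]

lemma tendsto_conjMul {z a b : Pt} {s : Set Pt} {t : Set ℂ}
    (hst : ∀ X ∈ s, conjMul X a b ∈ t) :
    Filter.Tendsto (fun X ↦ conjMul X a b) (𝓝[s] z) (𝓝[t] (conjMul z a b)) := by
  have hcont : Continuous fun X ↦ conjMul X a b := by unfold conjMul; fun_prop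
  exact tendsto_nhdsWithin_iff.2
    ⟨hcont.continuousAt.tendsto.mono_left nhdsWithin_le_nhds, eventually_mem_nhdsWithin.mono hst⟩

lemma tendsto_signedAngle_left {z a b : Pt} (hab : a ≠ b) (hz : z ∈ openSegment ℝ a b) :
    Filter.Tendsto (fun X ↦ signedAngle X a b) (𝓝[{X | 0 < cross (b - a) (X - a)}] z)
      (𝓝 Real.pi) := by
  have him : (conjMul z a b).im = 0 := by
    rw [conjMul_im_eq_cross, cross_sub_eq_zero_of_mem_segment (openSegment_subset_segment ℝ _ _ hz)]
  refine (Complex.tendsto_arg_nhdsWithin_im_nonneg_of_re_neg_of_im_zero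
    (conjMul_re_neg hab hz) him).comp (tendsto_conjMul fun X hX ↦ ?_)
  exact (le_of_lt hX).trans_eq (conjMul_im_eq_cross X a b).symm

lemma tendsto_signedAngle_right {z a b : Pt} (hab : a ≠ b) (hz : z ∈ openSegment ℝ a b) :
    Filter.Tendsto (fun X ↦ signedAngle X a b) (𝓝[{X | cross (b - a) (X - a) < 0}] z)
      (𝓝 (-Real.pi)) := by
  have him : (conjMul z a b).im = 0 := by
    rw [conjMul_im_eq_cross, cross_sub_eq_zero_of_mem_segment (openSegment_subset_segment ℝ _ _ hz)]
  refine (Complex.tendsto_arg_nhdsWithin_im_neg_of_re_neg_of_im_zero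
    (conjMul_re_neg hab hz) him).comp (tendsto_conjMul fun X hX ↦ ?_)
  exact (conjMul_im_eq_cross X a b).trans_lt hX

lemma exists_eq_smul_of_cross_eq_zero {u w : Pt} (hu : u ≠ 0) (h : cross u w = 0) :
    ∃ t : ℝ, w = t • u := by
  simp only [cross] at h
  rcases eq_or_ne u.1 0 with hu1 | hu1
  · have hu2 : u.2 ≠ 0 := fun hu2 ↦ hu (Prod.ext hu1 hu2)
    have hw1 : w.1 = 0 := by simpa [hu1, hu2] using h
    exact ⟨w.2 / u.2, Prod.ext (by simp [hu1, hw1]) (by simp [hu2])⟩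
  · refine ⟨w.1 / u.1, Prod.ext (by simp [hu1]) ?_⟩
    simp only [Prod.smul_snd, smul_eq_mul]
    field_simp
    linarith

lemma convex_setOf_cross_pos (u v : Pt) : Convex ℝ {X | 0 < cross u (X - v)} := by
  simp only [cross_sub_right, sub_pos]
  exact convex_halfSpace_gt ⟨cross_add_right u, fun t ↦ cross_smul_right t u⟩ _

lemma exists_cross_pos {u : Pt} (hu : u ≠ 0) : ∃ w, 0 < cross u w := by
  by_contra! h
  have h1 := h (-u.2, u.1)
  simp only [cross] at h1
  exact hu (Prod.ext (by simp only [Prod.fst_zero]; nlinarith [sq_nonneg u.2])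
    (by simp only [Prod.snd_zero]; nlinarith [sq_nonneg u.1]))

lemma exists_cross_pos_of_not_antiparallel {u v : Pt} (hu : u ≠ 0)
    (h : cross u v = 0 → ∃ t : ℝ, 0 < t ∧ v = t • u) : ∃ w, 0 < cross u w ∧ 0 < cross v w := by
  rcases lt_trichotomy (cross u v) 0 with huv | huv | huv
  · refine ⟨u - v, ?_, ?_⟩ <;>
    · simp only [cross_sub_right, cross_self, cross_swap u v]
      linarith
  · obtain ⟨t, ht, rfl⟩ := h huv
    obtain ⟨w, hw⟩ := exists_cross_pos hu
    exact ⟨w, hw, by rw [cross_smul_left]; positivity⟩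
  · refine ⟨v - u, ?_, ?_⟩ <;>
    · simp only [cross_sub_right, cross_self, cross_swap u v]
      linarith

end Pt

namespace SimplePolygon

open Pt

variable {m : ℕ} {P : SimplePolygon m}

lemma isClosed_edge (j : ZMod m) : IsClosed (P.edge j) := isClosed_segment _ _

lemma edge_subset_boundary (j : ZMod m) : P.edge j ⊆ P.boundary := subset_iUnion P.edge j

lemma notMem_edge {X : Pt} (hX : X ∉ P.boundary) (j : ZMod m) : X ∉ P.edge j :=
  fun hXj ↦ hX (edge_subset_boundary j hXj)

lemma ne_vertex {X : Pt} (hX : X ∉ P.boundary) (j : ZMod m) : P.p j ≠ X := by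
  rintro rfl
  exact notMem_edge hX j (left_mem_segment ℝ _ _)

lemma eq_of_mem_edge_of_mem_edge {s t : ZMod m} (hst : s ≠ t) {x : Pt} (hs : x ∈ P.edge s)
    (ht : x ∈ P.edge t) : (t = s + 1 ∧ x = P.p t) ∨ (s = t + 1 ∧ x = P.p s) := by
  rcases eq_or_ne (s + 1) t with rfl | hst'
  · have hx : x ∈ P.edge s ∩ P.edge (s + 1) := ⟨hs, ht⟩
    exact Or.inl ⟨rfl, by rwa [edge, edge, P.consec s] at hx⟩
  rcases eq_or_ne (t + 1) s with rfl | hts'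
  · have hx : x ∈ P.edge t ∩ P.edge (t + 1) := ⟨ht, hs⟩
    exact Or.inr ⟨rfl, by rwa [edge, edge, P.consec t] at hx⟩
  · have hx : x ∈ P.edge s ∩ P.edge t := ⟨hs, ht⟩
    rw [edge, edge, P.disj s t hst hst' hts'] at hx
    exact hx.elim

lemma vertex_notMem_edge {s t : ZMod m} (hst : s ≠ t) (hst' : s ≠ t + 1) : P.p s ∉ P.edge t := by
  intro hs
  rcases eq_of_mem_edge_of_mem_edge hst (left_mem_segment ℝ _ _) hs with ⟨-, h⟩ | ⟨h, -⟩
  · exact hst (P.inj h)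
  · exact hst' h

section Nontrivial

variable [Nontrivial (ZMod m)]

lemma vertex_ne_succ (i : ZMod m) : P.p i ≠ P.p (i + 1) :=
  P.inj.ne (by simp)

lemma notMem_edge_of_mem_openSegment {s t : ZMod m} (hst : s ≠ t) {x : Pt}
    (hx : x ∈ openSegment ℝ (P.p s) (P.p (s + 1))) : x ∉ P.edge t := by
  intro ht
  rcases eq_of_mem_edge_of_mem_edge hst (openSegment_subset_segment ℝ _ _ hx) ht with
    ⟨rfl, rfl⟩ | ⟨-, rfl⟩
  · exact vertex_ne_succ s (right_mem_openSegment_iff.1 hx)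
  · exact vertex_ne_succ s (left_mem_openSegment_iff.1 hx)

lemma notMem_vertexSet_of_mem_openSegment {s : ZMod m} {x : Pt}
    (hx : x ∈ openSegment ℝ (P.p s) (P.p (s + 1))) : x ∉ P.vertexSet := by
  rintro ⟨t, rfl⟩
  rcases eq_or_ne s t with rfl | hst
  · exact vertex_ne_succ s (left_mem_openSegment_iff.1 hx)
  · exact notMem_edge_of_mem_openSegment hst hx (left_mem_segment ℝ _ _)

end Nontrivial

section NeZero

variable [NeZero m]

lemma isClosed_boundary : IsClosed P.boundary := isClosed_iUnion_of_finite isClosed_edge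

lemma eventually_notMem_boundary {X : Pt} (hX : X ∉ P.boundary) : ∀ᶠ Y in 𝓝 X, Y ∉ P.boundary :=
  isClosed_boundary.isOpen_compl.mem_nhds hX

/-- The winding number of the polygon around `X`, for `X` off the boundary. -/
def wind (P : SimplePolygon m) (X : Pt) : ℝ :=
  (∑ i : ZMod m, signedAngle X (P.p i) (P.p (i + 1))) / (2 * Real.pi)

lemma sum_sub_succ_eq_zero {M : Type*} [AddCommGroup M] (f : ZMod m → M) :
    ∑ i, (f (i + 1) - f i) = 0 := by
  rw [Finset.sum_sub_distrib, sub_eq_zero]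
  exact Equiv.sum_comp (Equiv.addRight (1 : ZMod m)) f

lemma exists_wind_eq_intCast {X : Pt} (hX : X ∉ P.boundary) : ∃ k : ℤ, P.wind X = k := by
  have hsum : ((∑ i, signedAngle X (P.p i) (P.p (i + 1)) : ℝ) : Real.Angle) = 0 := by
    rw [← Real.Angle.coe_coeHom, map_sum, Real.Angle.coe_coeHom]
    simp_rw [signedAngle_coe one_ne_zero (ne_vertex hX _) (ne_vertex hX _), Real.Angle.coe_sub]
    exact sum_sub_succ_eq_zero fun i ↦ ((1 * toComplex (P.p i - X)).arg : Real.Angle)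
  obtain ⟨k, hk⟩ := Real.Angle.coe_eq_zero_iff.1 hsum
  exact ⟨k, by rw [wind, ← hk, zsmul_eq_mul, mul_div_cancel_right₀ _ Real.two_pi_pos.ne']⟩

lemma continuousAt_wind {X : Pt} (hX : X ∉ P.boundary) : ContinuousAt P.wind X := by
  unfold wind
  exact (tendsto_finsetSum _ fun i _ ↦ continuousAt_signedAngle (notMem_edge hX i)).div_const _

lemma wind_eq_of_isPreconnected {C : Set Pt} (hC : IsPreconnected C) (hCP : Disjoint C P.boundary)
    {x y : Pt} (hx : x ∈ C) (hy : y ∈ C) : P.wind x = P.wind y := by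
  have hmaps : MapsTo P.wind C (range ((↑) : ℤ → ℝ)) := fun X hX ↦ by
    obtain ⟨k, hk⟩ := exists_wind_eq_intCast (hCP.notMem_of_mem_left hX)
    exact ⟨k, hk.symm⟩
  exact hC.constant_of_mapsTo Int.isClosedEmbedding_coe_real.isEmbedding.isDiscrete_range
    (fun X hX ↦ (continuousAt_wind (hCP.notMem_of_mem_left hX)).continuousWithinAt) hmaps hx hy

lemma wind_eq_zero_of_notMem_convexHull {X : Pt} (hX : X ∉ convexHull ℝ P.vertexSet) :
    P.wind X = 0 := by
  obtain ⟨c, hc⟩ := exists_re_pos_of_notMem (convex_convexHull ℝ _)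
    (Set.Finite.isClosed_convexHull ℝ (finite_range P.p)) hX
  have hpos (i : ZMod m) := hc _ (subset_convexHull ℝ P.vertexSet (mem_range_self i))
  simp_rw [wind, signedAngle_eq_arg_sub_arg (hpos _) (hpos _),
    sum_sub_succ_eq_zero fun i ↦ (c * toComplex (P.p i - X)).arg, zero_div]

lemma isBounded_convexHull_vertexSet : Bornology.IsBounded (convexHull ℝ P.vertexSet) :=
  isBounded_convexHull.2 (finite_range P.p).isBounded

lemma mem_openRegion_of_wind_ne_zero {X : Pt} (hX : X ∉ P.boundary) (hw : P.wind X ≠ 0) :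
    X ∈ P.openRegion := by
  refine ⟨hX, (isBounded_convexHull_vertexSet (P := P)).subset fun Y hY ↦ ?_⟩
  by_contra hYhull
  refine hw ?_
  rw [← wind_eq_zero_of_notMem_convexHull hYhull]
  exact wind_eq_of_isPreconnected isPreconnected_connectedComponentIn
    (disjoint_compl_left.mono_left (connectedComponentIn_subset _ _))
    (mem_connectedComponentIn hX) hY

end NeZero

end SimplePolygon

namespace SimplePolygon

open Pt

variable {m : ℕ} {P : SimplePolygon m}

/-- The `i`-th edge as a vector. -/
def edgeVec (P : SimplePolygon m) (i : ZMod m) : Pt := P.p (i + 1) - P.p i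

/-- The signed distance, up to a positive factor, from the line through the `i`-th edge: positive to
the left of the edge, negative to its right. -/
def side (P : SimplePolygon m) (i : ZMod m) (X : Pt) : ℝ := cross (P.edgeVec i) (X - P.p i)

lemma side_eq_zero {i : ZMod m} {z : Pt} (hz : z ∈ P.edge i) : P.side i z = 0 :=
  cross_sub_eq_zero_of_mem_segment hz

lemma side_add (i : ZMod m) (z w : Pt) : P.side i (z + w) = P.side i z + cross (P.edgeVec i) w := by
  rw [side, side, add_sub_right_comm, cross_add_right]

lemma side_add_smul {i : ZMod m} {z : Pt} (hz : z ∈ P.edge i) (t : ℝ) (w : Pt) :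
    P.side i (z + t • w) = t * cross (P.edgeVec i) w := by
  rw [side_add, side_eq_zero hz, zero_add, cross_smul_right]

lemma tendsto_add_smul_zero (z w : Pt) : Filter.Tendsto (fun t : ℝ ↦ z + t • w) (𝓝[>] 0) (𝓝 z) := by
  have hcont : Continuous fun t : ℝ ↦ z + t • w := by fun_prop
  simpa using (hcont.tendsto 0).mono_left nhdsWithin_le_nhds

lemma tendsto_add_smul_left {i : ZMod m} {z w : Pt} (hz : z ∈ P.edge i)
    (hw : 0 < cross (P.edgeVec i) w) :
    Filter.Tendsto (fun t : ℝ ↦ z + t • w) (𝓝[>] 0) (𝓝[{X | 0 < P.side i X}] z) := by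
  refine tendsto_nhdsWithin_iff.2 ⟨tendsto_add_smul_zero z w, ?_⟩
  filter_upwards [self_mem_nhdsWithin] with t ht
  exact (mul_pos ht hw).trans_eq (side_add_smul hz t w).symm

lemma tendsto_add_smul_right {i : ZMod m} {z w : Pt} (hz : z ∈ P.edge i)
    (hw : cross (P.edgeVec i) w < 0) :
    Filter.Tendsto (fun t : ℝ ↦ z + t • w) (𝓝[>] 0) (𝓝[{X | P.side i X < 0}] z) := by
  refine tendsto_nhdsWithin_iff.2 ⟨tendsto_add_smul_zero z w, ?_⟩
  filter_upwards [self_mem_nhdsWithin] with t ht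
  exact (side_add_smul hz t w).trans_lt (mul_neg_of_pos_of_neg ht hw)

section Nontrivial

variable [Nontrivial (ZMod m)]

lemma edgeVec_ne_zero (i : ZMod m) : P.edgeVec i ≠ 0 := sub_ne_zero.2 (vertex_ne_succ i).symm

lemma exists_cross_edgeVec_pos (P : SimplePolygon m) (i : ZMod m) :
    ∃ w, 0 < cross (P.edgeVec i) w ∧ 0 < cross (P.edgeVec (i + 1)) w := by
  refine exists_cross_pos_of_not_antiparallel (edgeVec_ne_zero i) fun hcross ↦ ?_
  obtain ⟨t, ht⟩ := exists_eq_smul_of_cross_eq_zero (edgeVec_ne_zero i) hcross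
  refine ⟨t, ?_, ht⟩
  by_contra! ht_nonpos
  set s : ℝ := (1 - t)⁻¹
  have hs_pos : 0 < s := inv_pos.2 (by linarith)
  have hs_eq : s * (1 - t) = 1 := inv_mul_cancel₀ (by linarith)
  have hmem : P.p (i + 1) + s • P.edgeVec (i + 1) ∈ ({P.p (i + 1)} : Set Pt) := by
    rw [← P.consec i, segment_symm ℝ (P.p i), segment_eq_image', segment_eq_image']
    refine ⟨⟨-(s * t), ⟨by nlinarith, by nlinarith⟩, ?_⟩, s, ⟨hs_pos.le, by nlinarith⟩, rfl⟩
    beta_reduce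
    rw [ht, edgeVec]
    module
  have hzero : s • P.edgeVec (i + 1) = 0 := by simpa using hmem
  exact smul_ne_zero hs_pos.ne' (edgeVec_ne_zero (i + 1)) hzero

end Nontrivial

section NeZero

variable [NeZero m]

lemma eventually_notMem_edges {z : Pt} {s : Set (ZMod m)} (h : ∀ j ∈ s, z ∉ P.edge j) :
    ∀ᶠ X in 𝓝 z, ∀ j ∈ s, X ∉ P.edge j :=
  (Filter.eventually_all_finite s.toFinite).2 fun j hj ↦
    (isClosed_edge j).isOpen_compl.mem_nhds (h j hj)

/-- What the winding number is just to the right of the point `z` of the `i`-th edge: that edge then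
contributes the angle `-π`. -/
def rightWind (P : SimplePolygon m) (i : ZMod m) (z : Pt) : ℝ :=
  (∑ j ∈ Finset.univ.erase i, signedAngle z (P.p j) (P.p (j + 1)) - Real.pi) / (2 * Real.pi)

/-- The winding number is `n + 1` just to the left of the `i`-th edge and `n` just to its right. -/
def HasSideWinding (P : SimplePolygon m) (i : ZMod m) (n : ℤ) : Prop :=
  ∀ z ∈ openSegment ℝ (P.p i) (P.p (i + 1)),
    (∀ᶠ X in 𝓝[{X | 0 < P.side i X}] z, X ∉ P.boundary ∧ P.wind X = n + 1) ∧
    ∀ᶠ X in 𝓝[{X | P.side i X < 0}] z, X ∉ P.boundary ∧ P.wind X = n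

lemma wind_eq_rightWind_add (i : ZMod m) (X : Pt) :
    P.wind X =
      P.rightWind i X + (signedAngle X (P.p i) (P.p (i + 1)) + Real.pi) / (2 * Real.pi) := by
  rw [wind, rightWind, ← Finset.sum_erase_add _ _ (Finset.mem_univ i)]
  ring

lemma eventually_wind_eq_of_tendsto {l : Filter Pt} {k : ℤ} (hl : ∀ᶠ X in l, X ∉ P.boundary)
    (h : Filter.Tendsto P.wind l (𝓝 k)) : ∀ᶠ X in l, X ∉ P.boundary ∧ P.wind X = k := by
  filter_upwards [hl, h (Metric.ball_mem_nhds _ one_pos)] with X hX hXk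
  obtain ⟨k', hk'⟩ := exists_wind_eq_intCast hX
  rw [mem_preimage, hk', Metric.mem_ball, Int.dist_cast_real, Int.dist_eq, ← Int.cast_sub,
    ← Int.cast_abs, ← Int.cast_one, Int.cast_lt, Int.abs_lt_one_iff, sub_eq_zero] at hXk
  exact ⟨hX, by rw [hk', hXk]⟩

lemma HasSideWinding.eventually_left {i : ZMod m} {n : ℤ} (h : P.HasSideWinding i n) {z w : Pt}
    (hz : z ∈ openSegment ℝ (P.p i) (P.p (i + 1))) (hw : 0 < cross (P.edgeVec i) w) :
    ∀ᶠ t : ℝ in 𝓝[>] 0, z + t • w ∉ P.boundary ∧ P.wind (z + t • w) = n + 1 :=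
  (tendsto_add_smul_left (openSegment_subset_segment ℝ _ _ hz) hw).eventually (h z hz).1

lemma HasSideWinding.eventually_right {i : ZMod m} {n : ℤ} (h : P.HasSideWinding i n) {z w : Pt}
    (hz : z ∈ openSegment ℝ (P.p i) (P.p (i + 1))) (hw : cross (P.edgeVec i) w < 0) :
    ∀ᶠ t : ℝ in 𝓝[>] 0, z + t • w ∉ P.boundary ∧ P.wind (z + t • w) = n :=
  (tendsto_add_smul_right (openSegment_subset_segment ℝ _ _ hz) hw).eventually (h z hz).2

section Nontrivial

variable [Nontrivial (ZMod m)]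

lemma continuousAt_rightWind {i : ZMod m} {z : Pt}
    (hz : z ∈ openSegment ℝ (P.p i) (P.p (i + 1))) : ContinuousAt (P.rightWind i) z := by
  unfold rightWind
  refine ContinuousAt.div_const (ContinuousAt.sub ?_ continuousAt_const) _
  exact tendsto_finsetSum _ fun j hj ↦ continuousAt_signedAngle
    (notMem_edge_of_mem_openSegment (Finset.ne_of_mem_erase hj).symm hz)

lemma eventually_notMem_boundary_of_side_ne_zero {i : ZMod m} {z : Pt}
    (hz : z ∈ openSegment ℝ (P.p i) (P.p (i + 1))) :
    ∀ᶠ X in 𝓝 z, P.side i X ≠ 0 → X ∉ P.boundary := by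
  filter_upwards [eventually_notMem_edges (s := {j | i ≠ j})
    fun j hij ↦ notMem_edge_of_mem_openSegment hij hz] with X hX hside hXP
  obtain ⟨j, hj⟩ := mem_iUnion.1 hXP
  rcases eq_or_ne i j with rfl | hij
  · exact hside (side_eq_zero hj)
  · exact hX j hij hj

lemma tendsto_wind_left {i : ZMod m} {z : Pt} (hz : z ∈ openSegment ℝ (P.p i) (P.p (i + 1))) :
    Filter.Tendsto P.wind (𝓝[{X | 0 < P.side i X}] z) (𝓝 (P.rightWind i z + 1)) := by
  have hlim := ((continuousAt_rightWind hz).tendsto.mono_left nhdsWithin_le_nhds).add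
    (((tendsto_signedAngle_left (vertex_ne_succ i) hz).add_const Real.pi).div_const (2 * Real.pi))
  rw [← two_mul, div_self Real.two_pi_pos.ne'] at hlim
  exact hlim.congr fun X ↦ (wind_eq_rightWind_add i X).symm

lemma tendsto_wind_right {i : ZMod m} {z : Pt} (hz : z ∈ openSegment ℝ (P.p i) (P.p (i + 1))) :
    Filter.Tendsto P.wind (𝓝[{X | P.side i X < 0}] z) (𝓝 (P.rightWind i z)) := by
  have hlim := ((continuousAt_rightWind hz).tendsto.mono_left nhdsWithin_le_nhds).add
    (((tendsto_signedAngle_right (vertex_ne_succ i) hz).add_const Real.pi).div_const (2 * Real.pi))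
  rw [neg_add_cancel, zero_div, add_zero] at hlim
  exact hlim.congr fun X ↦ (wind_eq_rightWind_add i X).symm

lemma exists_rightWind_eq_intCast {i : ZMod m} {z : Pt}
    (hz : z ∈ openSegment ℝ (P.p i) (P.p (i + 1))) : ∃ k : ℤ, (k : ℝ) = P.rightWind i z := by
  obtain ⟨w, hw⟩ := exists_cross_pos (edgeVec_ne_zero (P := P) i)
  have hne : (𝓝[{X | P.side i X < 0}] z).NeBot :=
    (tendsto_add_smul_right (openSegment_subset_segment ℝ _ _ hz) (w := -w)
      (by rw [cross_neg_right]; linarith)).neBot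
  refine Int.isClosedEmbedding_coe_real.isClosed_range.mem_of_tendsto (tendsto_wind_right hz) ?_
  filter_upwards [nhdsWithin_le_nhds (eventually_notMem_boundary_of_side_ne_zero hz),
    self_mem_nhdsWithin] with X hX hside
  obtain ⟨k, hk⟩ := exists_wind_eq_intCast (hX (ne_of_lt hside))
  exact ⟨k, hk.symm⟩

lemma exists_hasSideWinding (P : SimplePolygon m) (i : ZMod m) : ∃ n, P.HasSideWinding i n := by
  obtain ⟨-, ⟨n, rfl⟩, hn⟩ := (convex_openSegment (P.p i) (P.p (i + 1))).isPreconnected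
    |>.eqOn_const_of_mapsTo Int.isClosedEmbedding_coe_real.isEmbedding.isDiscrete_range
      (fun z hz ↦ (continuousAt_rightWind hz).continuousWithinAt)
      (fun z hz ↦ exists_rightWind_eq_intCast hz) (range_nonempty _)
  refine ⟨n, fun z hz ↦ ?_⟩
  have hoff := eventually_notMem_boundary_of_side_ne_zero hz
  have hleft := tendsto_wind_left hz
  have hright := tendsto_wind_right hz
  rw [hn hz, Function.const_apply] at hleft hright
  constructor
  · have hleft' := eventually_wind_eq_of_tendsto (k := n + 1) ?_ (by exact_mod_cast hleft)
    · exact_mod_cast hleft'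
    filter_upwards [nhdsWithin_le_nhds hoff, self_mem_nhdsWithin] with X hX hside
    exact hX (ne_of_gt hside)
  · refine eventually_wind_eq_of_tendsto ?_ hright
    filter_upwards [nhdsWithin_le_nhds hoff, self_mem_nhdsWithin] with X hX hside
    exact hX (ne_of_lt hside)

end Nontrivial

end NeZero

end SimplePolygon

namespace SimplePolygon

open Pt

variable {m : ℕ} [NeZero m] {P : SimplePolygon m}

lemma exists_ball_disjoint_boundary (P : SimplePolygon m) (i : ZMod m) :
    ∃ δ > 0, ∀ X ∈ Metric.ball (P.p (i + 1)) δ, P.side i X ≠ 0 → P.side (i + 1) X ≠ 0 →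
      X ∉ P.boundary := by
  have hfar := eventually_notMem_edges (P := P) (z := P.p (i + 1)) (s := {j | i ≠ j ∧ i + 1 ≠ j})
    fun j hj ↦ vertex_notMem_edge hj.2 fun h ↦ hj.1 (add_right_cancel h)
  obtain ⟨δ, hδ, hball⟩ := Metric.eventually_nhds_iff_ball.1 hfar
  refine ⟨δ, hδ, fun X hX hside hside' hXP ↦ ?_⟩
  obtain ⟨j, hj⟩ := mem_iUnion.1 hXP
  refine hball X hX j ⟨?_, ?_⟩ hj <;> rintro rfl
  exacts [hside (side_eq_zero hj), hside' (side_eq_zero hj)]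

-- Near a vertex, the points on a given side of both incident edges form a convex set that misses
-- the boundary; if the turn at the vertex has the right sign, it borders both edges.
lemma exists_wind_eq_across_vertex {i : ZMod m} {w : Pt} {σ : ℝ}
    (hw : 0 < σ * cross (P.edgeVec i) w) (hw' : 0 < σ * cross (P.edgeVec (i + 1)) w)
    (hturn : 0 ≤ σ * cross (P.edgeVec i) (P.edgeVec (i + 1))) :
    ∃ s ∈ Ioo (0 : ℝ) 1, ∀ᶠ t : ℝ in 𝓝[>] 0,
      P.wind (P.p (i + 1) + s • -P.edgeVec i + t • w) =
        P.wind (P.p (i + 1) + s • P.edgeVec (i + 1) + t • w) := by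
  set v := P.p (i + 1)
  obtain ⟨δ, hδ, hball⟩ := P.exists_ball_disjoint_boundary i
  set C := Metric.ball v δ ∩ ({X | 0 < cross (σ • P.edgeVec i) (X - v)} ∩
    {X | 0 < cross (σ • P.edgeVec (i + 1)) (X - v)})
  have hC : Convex ℝ C := (convex_ball _ _).inter
    ((convex_setOf_cross_pos _ _).inter (convex_setOf_cross_pos _ _))
  have hCP : Disjoint C P.boundary := by
    refine disjoint_left.2 fun X ⟨hX, hX1, hX2⟩ ↦ hball X hX ?_ ?_
    all_goals change 0 < cross _ _ at hX1 hX2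
    · rw [← add_sub_cancel v X, side_add, side_eq_zero (right_mem_segment ℝ _ _), zero_add]
      exact right_ne_zero_of_mul (cross_smul_left σ _ _ ▸ hX1.ne')
    · rw [← add_sub_cancel v X, side_add, side_eq_zero (left_mem_segment ℝ _ _), zero_add]
      exact right_ne_zero_of_mul (cross_smul_left σ _ _ ▸ hX2.ne')
  have hsmall (u : Pt) : ∀ᶠ s : ℝ in 𝓝[>] 0, v + s • u ∈ Metric.ball v δ :=
    tendsto_add_smul_zero v u (Metric.ball_mem_nhds v hδ)
  obtain ⟨s, ⟨hs1, hs2⟩, hs⟩ := (((hsmall (-P.edgeVec i)).and (hsmall (P.edgeVec (i + 1)))).and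
    (Ioo_mem_nhdsGT one_pos)).exists
  refine ⟨s, hs, ?_⟩
  filter_upwards [tendsto_add_smul_zero _ w (Metric.isOpen_ball.mem_nhds hs1),
    tendsto_add_smul_zero _ w (Metric.isOpen_ball.mem_nhds hs2),
    self_mem_nhdsWithin] with t h1 h2 ht
  have hturn' := mul_nonneg hs.1.le hturn
  have hwt := mul_pos ht hw
  have hwt' := mul_pos ht hw'
  refine wind_eq_of_isPreconnected hC.isPreconnected hCP ⟨h1, ?_, ?_⟩ ⟨h2, ?_, ?_⟩ <;>
  · change 0 < cross _ _
    rw [add_assoc, add_sub_cancel_left]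
    simp only [cross_smul_left, cross_smul_right, cross_add_right, cross_neg_right, cross_self,
      cross_swap (P.edgeVec i)]
    linarith

variable [Nontrivial (ZMod m)]

lemma HasSideWinding.succ {i : ZMod m} {n : ℤ} (h : P.HasSideWinding i n) :
    P.HasSideWinding (i + 1) n := by
  obtain ⟨n', h'⟩ := P.exists_hasSideWinding (i + 1)
  have hi {s : ℝ} (hs : s ∈ Ioo 0 1) :
      P.p (i + 1) + s • -P.edgeVec i ∈ openSegment ℝ (P.p i) (P.p (i + 1)) := by
    rw [openSegment_symm, openSegment_eq_image']
    exact ⟨s, hs, by simp [edgeVec]⟩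
  have hi' {s : ℝ} (hs : s ∈ Ioo 0 1) :
      P.p (i + 1) + s • P.edgeVec (i + 1) ∈ openSegment ℝ (P.p (i + 1)) (P.p (i + 1 + 1)) := by
    rw [openSegment_eq_image']
    exact ⟨s, hs, rfl⟩
  obtain ⟨w, hw, hw'⟩ := P.exists_cross_edgeVec_pos i
  suffices hn : n = n' by rwa [hn]
  rcases le_total 0 (cross (P.edgeVec i) (P.edgeVec (i + 1))) with hturn | hturn
  · obtain ⟨s, hs, heq⟩ := exists_wind_eq_across_vertex (P := P) (i := i) (w := w) (σ := 1)
      (by simpa) (by simpa) (by simpa)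
    obtain ⟨t, ht, ⟨-, ht1⟩, -, ht2⟩ := (heq.and ((h.eventually_left (hi hs) hw).and
      (h'.eventually_left (hi' hs) hw'))).exists
    rw [ht1, ht2] at ht
    exact_mod_cast add_right_cancel ht
  · have hneg {u : Pt} (hu : 0 < cross u w) : cross u (-w) < 0 := by
      rw [cross_neg_right]; linarith
    obtain ⟨s, hs, heq⟩ := exists_wind_eq_across_vertex (P := P) (i := i) (w := -w) (σ := -1)
      (by linarith [hneg hw]) (by linarith [hneg hw']) (by linarith)
    obtain ⟨t, ht, ⟨-, ht1⟩, -, ht2⟩ := (heq.and ((h.eventually_right (hi hs) (hneg hw)).and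
      (h'.eventually_right (hi' hs) (hneg hw')))).exists
    rw [ht1, ht2] at ht
    exact_mod_cast ht

lemma exists_forall_hasSideWinding (P : SimplePolygon m) : ∃ n, ∀ i, P.HasSideWinding i n := by
  obtain ⟨n, h0⟩ := P.exists_hasSideWinding 0
  have hcast (k : ℕ) : P.HasSideWinding (k : ZMod m) n := by
    induction k with
    | zero => simpa using h0
    | succ k hk => simpa using hk.succ
  exact ⟨n, fun i ↦ by simpa using hcast i.val⟩

end SimplePolygon

lemma exists_first_mem {α : Type*} [TopologicalSpace α] {K : Set α} (hK : IsClosed K) {γ : ℝ → α}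
    (hγ : Continuous γ) {T₀ T : ℝ} (h₀ : ∀ᶠ t in 𝓝[>] T₀, γ t ∉ K) (hT : T₀ < T) (hTK : γ T ∈ K) :
    ∃ t > T₀, γ t ∈ K ∧ ∀ s ∈ Ioo T₀ t, γ s ∉ K := by
  obtain ⟨u, hu, hsub⟩ := mem_nhdsGT_iff_exists_Ioo_subset.1 h₀
  have huT : u ≤ T := not_lt.1 fun hTu ↦ hsub ⟨hT, hTu⟩ hTK
  obtain ⟨t, ⟨⟨hut, -⟩, htK⟩, hleast⟩ := (isCompact_Icc.inter_right (hK.preimage hγ)).exists_isLeast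
    (s := Icc u T ∩ γ ⁻¹' K) ⟨T, ⟨huT, le_rfl⟩, hTK⟩
  refine ⟨t, lt_of_lt_of_le hu hut, htK, fun s hs hsK ↦ ?_⟩
  rcases lt_or_ge s u with hsu | hus
  · exact hsub ⟨hs.1, hsu⟩ hsK
  by_cases hsT : s ≤ T
  · exact absurd (hleast ⟨⟨hus, hsT⟩, hsK⟩) hs.2.not_ge
  · exact absurd (hleast ⟨⟨huT, le_rfl⟩, hTK⟩) ((not_le.1 hsT).trans hs.2).not_ge

namespace Pt

open MeasureTheory in
lemma ae_cross_ne_zero {u : Pt} (hu : u ≠ 0) (v : Pt) :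
    ∀ᵐ X : Pt, cross u (X - v) ≠ 0 := by
  let f : Pt →ₗ[ℝ] ℝ :=
    { toFun := cross u
      map_add' := cross_add_right u
      map_smul' := fun t w ↦ cross_smul_right t u w }
  have hf : AffineSubspace.mk' v f.ker ≠ ⊤ := fun htop ↦ by
    obtain ⟨w, hw⟩ := exists_cross_pos hu
    have hmem : w + v ∈ AffineSubspace.mk' v f.ker := htop ▸ AffineSubspace.mem_top ℝ _ _
    rw [AffineSubspace.mem_mk', vsub_eq_sub, add_sub_cancel_right] at hmem
    exact hw.ne' hmem
  refine measure_mono_null (fun X hX ↦ ?_) (Measure.addHaar_affineSubspace volume _ hf)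
  exact AffineSubspace.mem_mk'.2 (not_not.1 hX)

end Pt

namespace SimplePolygon

open Pt

variable {m : ℕ} {P : SimplePolygon m}

lemma mem_openSegment_of_mem_edge {j : ZMod m} {x : Pt} (hx : x ∈ P.edge j)
    (hxv : x ∉ P.vertexSet) : x ∈ openSegment ℝ (P.p j) (P.p (j + 1)) := by
  rw [edge, ← insert_endpoints_openSegment] at hx
  rcases hx with rfl | rfl | hx
  · exact absurd (mem_range_self _) hxv
  · exact absurd (mem_range_self _) hxv
  · exact hx

lemma eventually_mem_edge_of_cross_eq_zero [Nontrivial (ZMod m)] {j : ZMod m} {x d : Pt}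
    (hx : x ∈ openSegment ℝ (P.p j) (P.p (j + 1))) (hd : cross (P.edgeVec j) d = 0) :
    ∀ᶠ s : ℝ in 𝓝[>] 0, x + s • d ∈ P.edge j := by
  obtain ⟨c, rfl⟩ := exists_eq_smul_of_cross_eq_zero (edgeVec_ne_zero j) hd
  rw [openSegment_eq_image'] at hx
  obtain ⟨u, hu, rfl⟩ := hx
  have hcont : Continuous fun s : ℝ ↦ u + s * c := by fun_prop
  have hmem : ∀ᶠ s : ℝ in 𝓝 0, u + s * c ∈ Icc (0 : ℝ) 1 :=
    hcont.continuousAt.preimage_mem_nhds (by simpa using Icc_mem_nhds hu.1 hu.2)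
  filter_upwards [nhdsWithin_le_nhds hmem] with s hs
  rw [edge, segment_eq_image']
  refine ⟨_, hs, ?_⟩
  simp only [edgeVec]
  module

variable [NeZero m]

lemma wind_ray_eq {r d : Pt} {I : Set ℝ} (hI : IsPreconnected I)
    (hoff : ∀ s ∈ I, r + s • d ∉ P.boundary) {s t : ℝ} (hs : s ∈ I) (ht : t ∈ I) :
    P.wind (r + s • d) = P.wind (r + t • d) :=
  wind_eq_of_isPreconnected (hI.image (fun s ↦ r + s • d) (by fun_prop))
    (disjoint_left.2 (by rintro - ⟨s, hs, rfl⟩; exact hoff s hs))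
    (mem_image_of_mem _ hs) (mem_image_of_mem _ ht)

lemma wind_eq_of_hit {r d : Pt} {t : ℝ} (ht : 0 < t)
    (hoff : ∀ s ∈ Ioo 0 t, r + s • d ∉ P.boundary) {j : ZMod m} {n : ℤ} (hn : P.HasSideWinding j n)
    (hj : r + t • d ∈ openSegment ℝ (P.p j) (P.p (j + 1))) (hd : cross (P.edgeVec j) d ≠ 0)
    {s : ℝ} (hs : s ∈ Ioo 0 t) :
    P.wind (r + s • d) = if cross (P.edgeVec j) d < 0 then (n + 1 : ℝ) else n := by
  have hback (u : ℝ) : r + t • d + u • -d = r + (t - u) • d := by module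
  have hwind : ∀ᶠ u : ℝ in 𝓝[>] 0,
      P.wind (r + (t - u) • d) = if cross (P.edgeVec j) d < 0 then (n + 1 : ℝ) else n := by
    simp_rw [← hback]
    split_ifs with hneg
    · exact (hn.eventually_left hj (by rw [cross_neg_right]; linarith)).mono fun _ h ↦ h.2
    · have hpos := lt_of_le_of_ne (not_lt.1 hneg) hd.symm
      exact (hn.eventually_right hj (by rw [cross_neg_right]; linarith)).mono fun _ h ↦ h.2
  obtain ⟨u, hu, hut⟩ := (hwind.and (Ioo_mem_nhdsGT ht)).exists
  rw [← hu]
  exact wind_ray_eq isPreconnected_Ioo hoff hs ⟨by linarith [hut.2], by linarith [hut.1]⟩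

variable [Nontrivial (ZMod m)]

lemma exists_first_hit {r d : Pt} (hoff : ∀ᶠ t : ℝ in 𝓝[>] 0, r + t • d ∉ P.boundary)
    (hvert : ∀ t : ℝ, 0 < t → r + t • d ∉ P.vertexSet) {T : ℝ} (hT : 0 < T)
    (hTP : r + T • d ∈ P.boundary) :
    ∃ t : ℝ, 0 < t ∧ (∀ s ∈ Ioo 0 t, r + s • d ∉ P.boundary) ∧
      ∃ j, r + t • d ∈ openSegment ℝ (P.p j) (P.p (j + 1)) ∧ cross (P.edgeVec j) d ≠ 0 := by
  obtain ⟨t, ht, htP, hlt⟩ :=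
    exists_first_mem isClosed_boundary (γ := fun t ↦ r + t • d) (by fun_prop) hoff hT hTP
  obtain ⟨j, hj⟩ := mem_iUnion.1 htP
  have hj' := mem_openSegment_of_mem_edge hj (hvert t ht)
  refine ⟨t, ht, hlt, j, hj', fun hd ↦ ?_⟩
  have hback := eventually_mem_edge_of_cross_eq_zero hj' (d := -d)
    (by rw [cross_neg_right, hd, neg_zero])
  obtain ⟨s, hs, hst⟩ := (hback.and (Ioo_mem_nhdsGT ht)).exists
  refine hlt (t - s) ⟨by linarith [hst.2], by linarith [hst.1]⟩ (edge_subset_boundary j ?_)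
  convert hs using 1
  module

open MeasureTheory

lemma ae_notMem_boundary : ∀ᵐ X : Pt, X ∉ P.boundary := by
  filter_upwards [ae_all_iff.2 fun i ↦ ae_cross_ne_zero (edgeVec_ne_zero (P := P) i) (P.p i)]
    with X hX hXP
  obtain ⟨i, hi⟩ := mem_iUnion.1 hXP
  exact hX i (side_eq_zero hi)

-- A ray from a generic point to a point of an edge avoids the vertices, and meets the boundary.
lemma ae_wind_eq_or {n : ℤ} (hn : ∀ i, P.HasSideWinding i n) :
    ∀ᵐ X : Pt, P.wind X = n ∨ P.wind X = n + 1 := by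
  set M := midpoint ℝ (P.p 0) (P.p (0 + 1))
  have hM : M ∈ openSegment ℝ (P.p 0) (P.p (0 + 1)) := midpoint_mem_openSegment _ _
  have hMv (i : ZMod m) : M - P.p i ≠ 0 := sub_ne_zero.2 fun h ↦
    notMem_vertexSet_of_mem_openSegment hM ⟨i, h.symm⟩
  filter_upwards [ae_notMem_boundary (P := P),
    ae_all_iff.2 fun i ↦ ae_cross_ne_zero (hMv i) (P.p i)] with X hX hXv
  have hvert (t : ℝ) : X + t • (M - X) ∉ P.vertexSet := by
    rintro ⟨i, hi⟩
    refine hXv i ?_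
    simp only [hi, cross, Prod.fst_sub, Prod.snd_sub, Prod.fst_add, Prod.snd_add, Prod.smul_fst,
      Prod.smul_snd, smul_eq_mul]
    ring
  obtain ⟨t, ht, hoff, j, hj, hd⟩ := exists_first_hit (d := M - X)
    (tendsto_add_smul_zero X (M - X) (eventually_notMem_boundary hX)) (fun t _ ↦ hvert t)
    one_pos (by
      rw [one_smul, add_sub_cancel]
      exact edge_subset_boundary 0 (openSegment_subset_segment ℝ _ _ hM))
  have hoff' : ∀ s ∈ Ico 0 t, X + s • (M - X) ∉ P.boundary := fun s hs ↦ by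
    rcases hs.1.eq_or_lt with rfl | hs0
    · simpa
    · exact hoff s ⟨hs0, hs.2⟩
  have hX0 := wind_ray_eq isPreconnected_Ico hoff' (left_mem_Ico.2 ht)
    (⟨by linarith, by linarith⟩ : t / 2 ∈ Ico 0 t)
  rw [zero_smul, add_zero, wind_eq_of_hit ht hoff (hn j) hj hd ⟨by linarith, by linarith⟩] at hX0
  rw [hX0]
  split_ifs
  exacts [Or.inr rfl, Or.inl rfl]

lemma eq_zero_or_eq_neg_one {n : ℤ} (hn : ∀ i, P.HasSideWinding i n) : n = 0 ∨ n = -1 := by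
  have hopen : IsOpen (convexHull ℝ P.vertexSet)ᶜ :=
    (Set.Finite.isClosed_convexHull ℝ (finite_range P.p)).isOpen_compl
  have hne : (convexHull ℝ P.vertexSet)ᶜ.Nonempty :=
    Filter.nonempty_of_mem (Bornology.isBounded_def.1 (isBounded_convexHull_vertexSet (P := P)))
  obtain ⟨X, hX, hwind⟩ := (Measure.dense_of_ae (ae_wind_eq_or hn)).inter_open_nonempty _ hopen hne
  rw [mem_ofPred_eq, wind_eq_zero_of_notMem_convexHull hX] at hwind
  exact hwind.imp (fun h ↦ by exact_mod_cast h.symm)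
    fun h ↦ eq_neg_of_add_eq_zero_left (by exact_mod_cast h.symm)

end SimplePolygon

namespace Pt

/-- The argument of `v - X`, up to a constant, with branch cut along the upward vertical ray from
`X`. -/
def cutAngle (X v : Pt) : ℝ := (Complex.I * toComplex (v - X)).arg

lemma cutAngle_mem_Ioo_of_gt {X v : Pt} (h : X.1 < v.1) : cutAngle X v ∈ Ioo 0 Real.pi := by
  have him : 0 < (Complex.I * toComplex (v - X)).im := by simpa using h
  refine ⟨lt_of_le_of_ne (Complex.arg_nonneg_iff.2 him.le) fun h0 ↦ ?_,
    Complex.arg_lt_pi_iff.2 (Or.inr him.ne')⟩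
  exact him.ne' (Complex.arg_eq_zero_iff.1 h0.symm).2

lemma cutAngle_mem_Ioo_of_lt {X v : Pt} (h : v.1 < X.1) : cutAngle X v ∈ Ioo (-Real.pi) 0 :=
  ⟨Complex.neg_pi_lt_arg _, Complex.arg_neg_iff.2 (by simpa using h)⟩

lemma signedAngle_eq_of_abs_lt {X a b : Pt} (ha : a.1 ≠ X.1) (hb : b.1 ≠ X.1) (k : ℤ)
    (h : |signedAngle X a b - (cutAngle X b - cutAngle X a - k * (2 * Real.pi))| < 2 * Real.pi) :
    signedAngle X a b = cutAngle X b - cutAngle X a - k * (2 * Real.pi) := by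
  refine eq_of_angle_coe_eq ?_ h
  rw [signedAngle_coe Complex.I_ne_zero (fun h ↦ ha (congrArg Prod.fst h))
    (fun h ↦ hb (congrArg Prod.fst h)),
    Real.Angle.angle_eq_iff_two_pi_dvd_sub]
  exact ⟨k, by simp only [cutAngle]; ring⟩

lemma signedAngle_eq_cutAngle_sub {X a b : Pt} (h : X ∉ segment ℝ a b)
    (hab : a.1 < X.1 ∧ b.1 < X.1 ∨ X.1 < a.1 ∧ X.1 < b.1) :
    signedAngle X a b = cutAngle X b - cutAngle X a := by
  have hangle := abs_lt.1 (abs_signedAngle_lt_pi h)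
  suffices heq : signedAngle X a b = cutAngle X b - cutAngle X a - (0 : ℤ) * (2 * Real.pi) by
    simpa using heq
  rcases hab with ⟨ha, hb⟩ | ⟨ha, hb⟩
  · have ha' := cutAngle_mem_Ioo_of_lt ha
    have hb' := cutAngle_mem_Ioo_of_lt hb
    refine signedAngle_eq_of_abs_lt ha.ne hb.ne 0 (abs_lt.2 ⟨?_, ?_⟩) <;> push_cast <;>
      linarith [ha'.1, ha'.2, hb'.1, hb'.2]
  · have ha' := cutAngle_mem_Ioo_of_gt ha
    have hb' := cutAngle_mem_Ioo_of_gt hb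
    refine signedAngle_eq_of_abs_lt ha.ne' hb.ne' 0 (abs_lt.2 ⟨?_, ?_⟩) <;> push_cast <;>
      linarith [ha'.1, ha'.2, hb'.1, hb'.2]

lemma cross_ne_zero_of_notMem_segment {X a b : Pt} (ha : a.1 < X.1) (hb : X.1 < b.1)
    (h : X ∉ segment ℝ a b) : cross (a - X) (b - X) ≠ 0 := by
  refine fun h0 ↦ h (mem_segment_of_cross_eq_zero h0 ?_)
  simp only [cross, Prod.fst_sub, Prod.snd_sub] at h0
  have hsnd : (b.1 - X.1) * ((a.2 - X.2) * (b.2 - X.2)) ≤ 0 := by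
    calc _ = (a.1 - X.1) * (b.2 - X.2) ^ 2 := by linear_combination -(b.2 - X.2) * h0
      _ ≤ 0 := mul_nonpos_of_nonpos_of_nonneg (sub_nonpos.2 ha.le) (sq_nonneg _)
  rw [conjMul_re]
  nlinarith [mul_pos (sub_pos.2 ha) (sub_pos.2 hb),
    nonpos_of_mul_nonpos_right hsnd (sub_pos.2 hb)]

lemma signedAngle_eq_of_cross_pos {X a b : Pt} (ha : a.1 < X.1) (hb : X.1 < b.1)
    (h : 0 < cross (a - X) (b - X)) : signedAngle X a b = cutAngle X b - cutAngle X a := by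
  have ha' := cutAngle_mem_Ioo_of_lt ha
  have hb' := cutAngle_mem_Ioo_of_gt hb
  have hpos := signedAngle_pos h
  have hle : signedAngle X a b ≤ Real.pi := Complex.arg_le_pi _
  simpa using signedAngle_eq_of_abs_lt ha.ne hb.ne' 0 (by
    rw [abs_lt]; push_cast; constructor <;> linarith [ha'.1, ha'.2, hb'.1, hb'.2])

lemma signedAngle_eq_of_cross_neg {X a b : Pt} (ha : a.1 < X.1) (hb : X.1 < b.1)
    (h : cross (a - X) (b - X) < 0) :
    signedAngle X a b = cutAngle X b - cutAngle X a - 2 * Real.pi := by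
  have ha' := cutAngle_mem_Ioo_of_lt ha
  have hb' := cutAngle_mem_Ioo_of_gt hb
  have hneg := signedAngle_neg h
  have hlt : -Real.pi < signedAngle X a b := Complex.neg_pi_lt_arg _
  simpa using signedAngle_eq_of_abs_lt ha.ne hb.ne' 1 (by
    rw [abs_lt]; push_cast; constructor <;> linarith [ha'.1, ha'.2, hb'.1, hb'.2])

/-- The height over `x` of the line through `a` and `b`, if this line is not vertical. -/
def lineHeight (a b : Pt) (x : ℝ) : ℝ := a.2 + (x - a.1) * ((b.2 - a.2) / (b.1 - a.1))

/-- If `a` is to the left of `b`, the open trapezoid between the segment from `a` to `b` and the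
horizontal line of height `c` below it; otherwise the empty set. -/
def trapezoid (c : ℝ) (a b : Pt) : Set Pt :=
  regionBetween (fun _ ↦ c) (lineHeight a b) (Ioo a.1 b.1)

/-- The signed number of times that the edge from `a` to `b` crosses the upward vertical ray from
`X`, counterclockwise crossings being positive. It is cut off below the height `c`, to make it
integrable. -/
def crossing (c : ℝ) (a b X : Pt) : ℝ :=
  (trapezoid c b a).indicator 1 X - (trapezoid c a b).indicator 1 X

lemma continuous_lineHeight (a b : Pt) : Continuous (lineHeight a b) := by
  unfold lineHeight; fun_prop

lemma trapezoid_eq_empty {a b : Pt} (c : ℝ) (h : b.1 ≤ a.1) : trapezoid c a b = ∅ := by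
  ext X
  simp [trapezoid, regionBetween, Ioo_eq_empty h.not_gt]

lemma mem_trapezoid_iff {c : ℝ} {a b X : Pt} (hc : c < X.2) :
    X ∈ trapezoid c a b ↔ a.1 < X.1 ∧ X.1 < b.1 ∧ cross (a - X) (b - X) < 0 := by
  have hcross (h : a.1 < b.1) :
      cross (a - X) (b - X) = (b.1 - a.1) * (X.2 - lineHeight a b X.1) := by
    have : b.1 - a.1 ≠ 0 := (sub_pos.2 h).ne'
    simp only [lineHeight, cross, Prod.fst_sub, Prod.snd_sub]
    field_simp
    ring
  change (a.1 < X.1 ∧ X.1 < b.1) ∧ c < X.2 ∧ X.2 < lineHeight a b X.1 ↔ _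
  rw [and_assoc]
  refine and_congr_right fun ha ↦ and_congr_right fun hb ↦ ?_
  have hab := ha.trans hb
  rw [hcross hab, ← smul_eq_mul, smul_neg_iff_of_pos_left (sub_pos.2 hab), sub_neg]
  exact and_iff_right hc

lemma crossing_swap (c : ℝ) (a b X : Pt) : crossing c b a X = -crossing c a b X :=
  (neg_sub _ _).symm

lemma crossing_eq_zero_of_snd_le {c : ℝ} {X : Pt} (h : X.2 ≤ c) (a b : Pt) :
    crossing c a b X = 0 := by
  have hX (a b : Pt) : X ∉ trapezoid c a b := fun hX ↦ hX.2.1.not_ge h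
  rw [crossing, indicator_of_notMem (hX b a), indicator_of_notMem (hX a b), sub_zero]

lemma signedAngle_eq_add_crossing_of_lt {c : ℝ} {a b X : Pt} (hc : c < X.2) (ha : a.1 < X.1)
    (hb : X.1 < b.1) (h : X ∉ segment ℝ a b) :
    signedAngle X a b = cutAngle X b - cutAngle X a + 2 * Real.pi * crossing c a b X := by
  rw [crossing, trapezoid_eq_empty c (ha.trans hb).le, indicator_empty]
  rcases (cross_ne_zero_of_notMem_segment ha hb h).lt_or_gt with hcross | hcross
  · rw [signedAngle_eq_of_cross_neg ha hb hcross,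
      indicator_of_mem ((mem_trapezoid_iff hc).2 ⟨ha, hb, hcross⟩)]
    simp only [Pi.one_apply]
    ring
  · rw [signedAngle_eq_of_cross_pos ha hb hcross,
      indicator_of_notMem fun hX ↦ ((mem_trapezoid_iff hc).1 hX).2.2.not_gt hcross]
    ring

lemma signedAngle_eq_add_crossing {c : ℝ} {a b X : Pt} (hc : c < X.2) (ha : a.1 ≠ X.1)
    (hb : b.1 ≠ X.1) (h : X ∉ segment ℝ a b) :
    signedAngle X a b = cutAngle X b - cutAngle X a + 2 * Real.pi * crossing c a b X := by
  by_cases hside : a.1 < X.1 ∧ b.1 < X.1 ∨ X.1 < a.1 ∧ X.1 < b.1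
  · have hcross : crossing c a b X = 0 := by
      rw [crossing, indicator_of_notMem, indicator_of_notMem, sub_zero] <;>
      · rw [mem_trapezoid_iff hc]
        grind
    rw [signedAngle_eq_cutAngle_sub h hside, hcross, mul_zero, add_zero]
  rcases ha.lt_or_gt with ha | ha <;> rcases hb.lt_or_gt with hb | hb
  · exact absurd (Or.inl ⟨ha, hb⟩) hside
  · exact signedAngle_eq_add_crossing_of_lt hc ha hb h
  · rw [segment_symm] at h
    rw [signedAngle_swap h, signedAngle_eq_add_crossing_of_lt hc hb ha h, crossing_swap c b a]
    ring
  · exact absurd (Or.inr ⟨ha, hb⟩) hside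

open MeasureTheory

lemma measurableSet_trapezoid (c : ℝ) (a b : Pt) : MeasurableSet (trapezoid c a b) :=
  measurableSet_regionBetween measurable_const (continuous_lineHeight a b).measurable
    measurableSet_Ioo

lemma le_lineHeight {c : ℝ} {a b : Pt} (ha : c ≤ a.2) (hb : c ≤ b.2) {x : ℝ}
    (hx : x ∈ Ioo a.1 b.1) : c ≤ lineHeight a b x := by
  have hab : 0 < b.1 - a.1 := sub_pos.2 (hx.1.trans hx.2)
  have hconvex : lineHeight a b x = ((b.1 - x) * a.2 + (x - a.1) * b.2) / (b.1 - a.1) := by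
    rw [lineHeight]; field_simp; ring
  rw [hconvex, le_div_iff₀ hab]
  nlinarith [mul_nonneg (sub_nonneg.2 hx.2.le) (sub_nonneg.2 ha),
    mul_nonneg (sub_nonneg.2 hx.1.le) (sub_nonneg.2 hb)]

lemma integral_lineHeight_sub (c : ℝ) {a b : Pt} (hab : a.1 < b.1) :
    ∫ x in a.1..b.1, (lineHeight a b x - c) = (b.1 - a.1) * ((a.2 + b.2) / 2 - c) := by
  have hint (x : ℝ) : HasDerivAt (fun x ↦ (a.2 - c) * x +
      (x - a.1) ^ 2 * ((b.2 - a.2) / (b.1 - a.1) / 2)) (lineHeight a b x - c) x := by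
    refine (((hasDerivAt_id x).const_mul (a.2 - c)).add
      ((((hasDerivAt_id x).sub_const a.1).pow 2).mul_const _)).congr_deriv ?_
    simp only [lineHeight, id]
    push_cast
    ring
  rw [intervalIntegral.integral_eq_sub_of_hasDerivAt (fun x _ ↦ hint x)
    (((continuous_lineHeight a b).sub continuous_const).intervalIntegrable _ _)]
  have : b.1 - a.1 ≠ 0 := (sub_pos.2 hab).ne'
  field_simp
  ring

lemma volume_trapezoid {c : ℝ} {a b : Pt} (hab : a.1 < b.1) (ha : c ≤ a.2) (hb : c ≤ b.2) :
    volume (trapezoid c a b) = ENNReal.ofReal ((b.1 - a.1) * ((a.2 + b.2) / 2 - c)) := by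
  have hint {f : ℝ → ℝ} (hf : Continuous f) : IntegrableOn f (Ioo a.1 b.1) :=
    hf.integrableOn_Icc.mono_set Ioo_subset_Icc_self
  rw [trapezoid, Measure.volume_eq_prod, volume_regionBetween_eq_integral (hint continuous_const)
    (hint (continuous_lineHeight a b)) measurableSet_Ioo fun x hx ↦ le_lineHeight ha hb hx,
    ← integral_lineHeight_sub c hab, intervalIntegral.integral_of_le hab.le,
    integral_Ioc_eq_integral_Ioo]
  rfl

lemma integral_crossing_of_lt {c : ℝ} {a b : Pt} (hab : a.1 < b.1) (ha : c ≤ a.2) (hb : c ≤ b.2) :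
    ∫ X, crossing c a b X = (a.1 - b.1) * ((a.2 + b.2) / 2 - c) := by
  have hpos : 0 ≤ (b.1 - a.1) * ((a.2 + b.2) / 2 - c) :=
    mul_nonneg (sub_nonneg.2 hab.le) (by linarith)
  simp only [crossing, trapezoid_eq_empty c hab.le, indicator_empty, zero_sub]
  rw [integral_neg, integral_indicator_one (measurableSet_trapezoid c a b), Measure.real,
    volume_trapezoid hab ha hb, ENNReal.toReal_ofReal hpos]
  ring

lemma integral_crossing {c : ℝ} {a b : Pt} (ha : c ≤ a.2) (hb : c ≤ b.2) :
    ∫ X, crossing c a b X = (a.1 - b.1) * ((a.2 + b.2) / 2 - c) := by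
  rcases lt_trichotomy a.1 b.1 with hab | hab | hab
  · exact integral_crossing_of_lt hab ha hb
  · simp [crossing, trapezoid_eq_empty c hab.le, trapezoid_eq_empty c hab.ge, hab]
  · simp_rw [crossing_swap c b a]
    rw [integral_neg, integral_crossing_of_lt hab hb ha]
    ring

lemma integrable_crossing {c : ℝ} {a b : Pt} (ha : c ≤ a.2) (hb : c ≤ b.2) :
    Integrable (crossing c a b) := by
  have hint {a b : Pt} (ha : c ≤ a.2) (hb : c ≤ b.2) :
      Integrable ((trapezoid c a b).indicator (1 : Pt → ℝ)) := by
    refine (integrable_indicator_iff (measurableSet_trapezoid c a b)).2 (integrableOn_const ?_)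
    rcases lt_or_ge a.1 b.1 with hab | hab
    · rw [volume_trapezoid hab ha hb]
      exact ENNReal.ofReal_ne_top
    · simp [trapezoid_eq_empty c hab]
  exact (hint hb ha).sub (hint ha hb)

end Pt

namespace SimplePolygon

open Pt MeasureTheory

variable {m : ℕ} [NeZero m] {P : SimplePolygon m}

lemma sum_range_natCast {M : Type*} [AddCommMonoid M] (f : ZMod m → M) :
    ∑ k ∈ Finset.range m, f k = ∑ i, f i :=
  Finset.sum_nbij' (fun k ↦ k) ZMod.val (fun _ _ ↦ Finset.mem_univ _)
    (fun i _ ↦ Finset.mem_range.2 i.val_lt)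
    (fun _ hk ↦ ZMod.val_natCast_of_lt (Finset.mem_range.1 hk))
    (fun i _ ↦ ZMod.natCast_zmod_val i) fun _ _ ↦ rfl

lemma signedArea_eq_sum (P : SimplePolygon m) :
    P.signedArea = ∑ i, cross (P.p i) (P.p (i + 1)) / 2 := by
  rw [signedArea, sum_range_natCast fun i ↦
    (P.p i).1 * (P.p (i + 1)).2 - (P.p (i + 1)).1 * (P.p i).2, Finset.mul_sum]
  refine Finset.sum_congr rfl fun i _ ↦ ?_
  rw [cross]
  ring

lemma wind_eq_sum_crossing {c : ℝ} {X : Pt} (hX : X ∉ P.boundary) (hc : c < X.2)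
    (hX' : ∀ i, (P.p i).1 ≠ X.1) : P.wind X = ∑ i, crossing c (P.p i) (P.p (i + 1)) X := by
  rw [wind, Finset.sum_congr rfl fun i _ ↦
    signedAngle_eq_add_crossing hc (hX' i) (hX' (i + 1)) (notMem_edge hX i),
    Finset.sum_add_distrib, sum_sub_succ_eq_zero fun i ↦ cutAngle X (P.p i), zero_add,
    ← Finset.mul_sum, mul_div_cancel_left₀ _ Real.two_pi_pos.ne']

lemma integral_sum_crossing {c : ℝ} (hc : ∀ i, c ≤ (P.p i).2) :
    ∫ X, ∑ i, crossing c (P.p i) (P.p (i + 1)) X = P.signedArea := by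
  rw [integral_finsetSum _ fun i _ ↦ integrable_crossing (hc i) (hc (i + 1)),
    Finset.sum_congr rfl fun i _ ↦ integral_crossing (hc i) (hc (i + 1)), signedArea_eq_sum,
    ← sub_eq_zero, ← Finset.sum_sub_distrib,
    ← sum_sub_succ_eq_zero fun i ↦ c * (P.p i).1 - (P.p i).1 * (P.p i).2 / 2]
  refine Finset.sum_congr rfl fun i _ ↦ ?_
  simp only [cross]
  ring

lemma exists_lt_snd (P : SimplePolygon m) (Y : Pt) : ∃ c, c < Y.2 ∧ ∀ i, c ≤ (P.p i).2 :=
  ((Filter.eventually_lt_atBot Y.2).and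
    (Filter.eventually_all.2 fun i ↦ Filter.eventually_le_atBot (P.p i).2)).exists

variable [Nontrivial (ZMod m)]

lemma sum_crossing_ae_eq (P : SimplePolygon m) (c : ℝ) :
    (fun X ↦ ∑ i, crossing c (P.p i) (P.p (i + 1)) X) =ᵐ[volume]
      {X | c < X.2}.indicator P.wind := by
  filter_upwards [ae_notMem_boundary (P := P), ae_all_iff.2 fun i ↦
    ae_cross_ne_zero (u := (0, 1)) (by simp) (P.p i)] with X hX hXv
  by_cases hcX : c < X.2
  · rw [indicator_of_mem (by exact hcX), wind_eq_sum_crossing hX hcX]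
    intro i hi
    exact hXv i (by simp [cross, hi])
  · rw [indicator_of_notMem (by exact hcX)]
    exact Finset.sum_eq_zero fun i _ ↦ crossing_eq_zero_of_snd_le (not_lt.1 hcX) _ _

lemma measurableSet_upperHalf (c : ℝ) : MeasurableSet {X : Pt | c < X.2} :=
  measurableSet_lt measurable_const measurable_snd

lemma integrableOn_wind {c : ℝ} (hc : ∀ i, c ≤ (P.p i).2) : IntegrableOn P.wind {X | c < X.2} := by
  rw [← integrable_indicator_iff (measurableSet_upperHalf c),
    ← integrable_congr (P.sum_crossing_ae_eq c)]
  exact integrable_finsetSum _ fun i _ ↦ integrable_crossing (hc i) (hc (i + 1))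

lemma setIntegral_wind {c : ℝ} (hc : ∀ i, c ≤ (P.p i).2) :
    ∫ X in {X | c < X.2}, P.wind X = P.signedArea := by
  rw [← integral_indicator (measurableSet_upperHalf c),
    ← integral_congr_ae (P.sum_crossing_ae_eq c), integral_sum_crossing hc]

lemma HasSideWinding.exists_wind_eq_add_one {i : ZMod m} {n : ℤ} (h : P.HasSideWinding i n) :
    ∃ Y ∉ P.boundary, P.wind Y = n + 1 := by
  obtain ⟨w, hw⟩ := exists_cross_pos (edgeVec_ne_zero (P := P) i)
  obtain ⟨t, ht⟩ := (h.eventually_left (midpoint_mem_openSegment _ _) hw).exists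
  exact ⟨_, ht⟩

lemma posOriented_iff {n : ℤ} (hn : ∀ i, P.HasSideWinding i n) : P.PosOriented ↔ n = 0 := by
  obtain ⟨Y, hY, hwindY⟩ := (hn 0).exists_wind_eq_add_one
  obtain ⟨c, hcY, hc⟩ := P.exists_lt_snd Y
  have hae := ae_restrict_of_ae (s := {X | c < X.2}) (ae_wind_eq_or hn)
  rw [PosOriented, ← setIntegral_wind hc]
  rcases eq_zero_or_eq_neg_one hn with rfl | rfl
  · have hnonneg : 0 ≤ᵐ[volume.restrict {X | c < X.2}] P.wind := by
      filter_upwards [hae] with X hX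
      rcases hX with hX | hX <;> norm_num [hX]
    have hev : ∀ᶠ X in 𝓝 Y, X ∈ Function.support P.wind ∩ {X | c < X.2} :=
      ((continuousAt_wind hY).eventually_ne (by norm_num [hwindY])).and
        (continuous_snd.continuousAt.eventually_const_lt hcY)
    simp only [iff_true, setIntegral_pos_iff_support_of_nonneg_ae hnonneg (integrableOn_wind hc)]
    exact Measure.measure_pos_of_mem_nhds volume hev
  · refine iff_of_false (not_lt.2 (integral_nonpos_of_ae ?_)) (by norm_num)
    filter_upwards [hae] with X hX
    rcases hX with hX | hX <;> norm_num [hX]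

end SimplePolygon

namespace Pt

lemma eq_zero_of_cross_eq_zero {u v x : Pt} (huv : cross u v ≠ 0) (hu : cross u x = 0)
    (hv : cross v x = 0) : x = 0 := by
  obtain ⟨t, rfl⟩ := exists_eq_smul_of_cross_eq_zero
    (fun h ↦ huv (by simp [h, cross]) : u ≠ 0) hu
  rw [cross_smul_right, cross_swap, mul_neg, neg_eq_zero] at hv
  rw [(mul_eq_zero.1 hv).resolve_right huv, zero_smul]

lemma exists_generic_direction {u v : Pt} (huv : cross u v < 0) {s : Set Pt} (hs : s.Finite)
    (hs0 : 0 ∉ s) : ∃ d, 0 < cross u d ∧ 0 < cross v d ∧ ∀ x ∈ s, cross d x ≠ 0 := by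
  obtain ⟨t, ht, hts⟩ :=
    ((Ioi_infinite (0 : ℝ)).sdiff (hs.image fun x ↦ cross u x / cross v x)).nonempty
  refine ⟨u - t • v, ?_, ?_, fun x hx hcross ↦ ?_⟩
  · rw [cross_sub_right, cross_self, cross_smul_right]
    linarith [mul_neg_of_pos_of_neg ht huv]
  · rw [cross_sub_right, cross_smul_right, cross_self, cross_swap]
    linarith
  · have hlin : cross u x = t * cross v x := by
      rw [cross_swap, cross_sub_right, cross_smul_right, cross_swap u, cross_swap v] at hcross
      linarith
    by_cases hv : cross v x = 0
    · rw [hv, mul_zero] at hlin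
      exact hs0 (eq_zero_of_cross_eq_zero huv.ne hlin hv ▸ hx)
    · exact hts ⟨x, hx, (div_eq_iff hv).2 hlin⟩

end Pt

namespace SimplePolygon

open Pt

variable {m : ℕ} {P : SimplePolygon m}

lemma isReflex_iff {i : ZMod m} :
    P.IsReflex i ↔ cross (P.edgeVec (i - 1)) (P.edgeVec i) < 0 := by
  rw [IsReflex, edgeVec, edgeVec, sub_add_cancel]

lemma IsReflex.side_nonpos {i : ZMod m} (hi : P.IsReflex i) {X : Pt} (hX : X ∈ P.edge (i - 1)) :
    P.side i X ≤ 0 := by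
  rw [edge, sub_add_cancel, segment_symm, segment_eq_image'] at hX
  obtain ⟨t, ⟨ht, -⟩, rfl⟩ := hX
  have hvec : P.p (i - 1) - P.p i = -P.edgeVec (i - 1) := by rw [edgeVec, sub_add_cancel, neg_sub]
  rw [side_add_smul (left_mem_segment ℝ _ _), hvec, cross_neg_right, cross_swap, neg_neg]
  exact mul_nonpos_of_nonneg_of_nonpos ht (isReflex_iff.1 hi).le

section NeZero

variable [NeZero m]

lemma IsReflex.exists_ball_disjoint_boundary {i : ZMod m} (hi : P.IsReflex i) :
    ∃ δ > 0, ∀ X ∈ Metric.ball (P.p i) δ, 0 < P.side i X → X ∉ P.boundary := by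
  obtain ⟨δ, hδ, hball⟩ := Metric.eventually_nhds_iff_ball.1 <|
    eventually_notMem_edges (P := P) (s := {j | i ≠ j ∧ i ≠ j + 1})
      fun j hj ↦ vertex_notMem_edge hj.1 hj.2
  refine ⟨δ, hδ, fun X hX hside hXP ↦ ?_⟩
  obtain ⟨j, hj⟩ := mem_iUnion.1 hXP
  rcases eq_or_ne i j with rfl | hij
  · exact hside.ne' (side_eq_zero hj)
  rcases eq_or_ne i (j + 1) with rfl | hij'
  · exact hside.not_ge (hi.side_nonpos (by rwa [add_sub_cancel_right]))
  · exact hball X hX j ⟨hij, hij'⟩ hj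

lemma exists_mem_boundary_of_wind_ne_zero {r d : Pt} {s : ℝ} (hs : 0 < s)
    (hw : P.wind (r + s • d) ≠ 0) (hd : d ≠ 0) : ∃ t : ℝ, 0 < t ∧ r + t • d ∈ P.boundary := by
  by_contra! hoff
  have hfar : Filter.Tendsto (fun t : ℝ ↦ r + t • d) Filter.atTop (Bornology.cobounded Pt) := by
    refine (tendsto_const_add_cobounded r).comp (tendsto_norm_atTop_iff_cobounded.1 ?_)
    simp_rw [norm_smul]
    exact tendsto_norm_atTop_atTop.atTop_mul_const (norm_pos_iff.2 hd)
  obtain ⟨t, hthull, ht⟩ := ((hfar.eventually (Bornology.isBounded_def.1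
    (isBounded_convexHull_vertexSet (P := P)))).and (Filter.eventually_gt_atTop 0)).exists
  exact hw (wind_eq_zero_of_notMem_convexHull hthull ▸ wind_ray_eq isPreconnected_Ioi hoff hs ht)

-- Left of the edge leaving a reflex vertex, a half-disc around that vertex is off the boundary.
lemma IsReflex.eventually_wind_eq {i : ZMod m} (hi : P.IsReflex i) {n : ℤ}
    (hn : P.HasSideWinding i n) {d : Pt} (hd : 0 < cross (P.edgeVec i) d) :
    ∀ᶠ s : ℝ in 𝓝[>] 0, P.p i + s • d ∉ P.boundary ∧ P.wind (P.p i + s • d) = n + 1 := by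
  obtain ⟨δ, hδ, hoff⟩ := hi.exists_ball_disjoint_boundary
  set H := Metric.ball (P.p i) δ ∩ {X | 0 < P.side i X}
  have hconv : Convex ℝ H := (convex_ball _ _).inter (convex_setOf_cross_pos _ _)
  have hdisj : Disjoint H P.boundary := disjoint_left.2 fun X hX ↦ hoff X hX.1 hX.2
  have hmem {z : Pt} (hz : z ∈ P.edge i) (hzδ : z ∈ Metric.ball (P.p i) δ) :
      ∀ᶠ s : ℝ in 𝓝[>] 0, z + s • d ∈ H :=
    ((tendsto_add_smul_zero z d).eventually (Metric.isOpen_ball.mem_nhds hzδ)).and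
      ((tendsto_add_smul_left hz hd).eventually self_mem_nhdsWithin)
  obtain ⟨t, htδ, ht⟩ := (((tendsto_add_smul_zero (P.p i) (P.edgeVec i)).eventually
    (Metric.ball_mem_nhds _ hδ)).and (Ioo_mem_nhdsGT one_pos)).exists
  have hz : P.p i + t • P.edgeVec i ∈ openSegment ℝ (P.p i) (P.p (i + 1)) := by
    rw [openSegment_eq_image']
    exact ⟨t, ht, rfl⟩
  obtain ⟨s, hsH, -, hsw⟩ := ((hmem (openSegment_subset_segment ℝ _ _ hz) htδ).and
    (hn.eventually_left hz hd)).exists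
  filter_upwards [hmem (left_mem_segment ℝ _ _) (Metric.mem_ball_self hδ)] with u hu
  refine ⟨disjoint_left.1 hdisj hu, ?_⟩
  rw [← hsw, wind_eq_of_isPreconnected hconv.isPreconnected hdisj hu hsH]

lemma IsReflex.exists_generic_ray {i : ZMod m} (hi : P.IsReflex i) :
    ∃ d, 0 < cross (P.edgeVec (i - 1)) d ∧ 0 < cross (P.edgeVec i) d ∧
      ∀ t : ℝ, 0 < t → P.p i + t • d ∉ P.vertexSet := by
  obtain ⟨d, hd₁, hd₂, hd⟩ := exists_generic_direction (isReflex_iff.1 hi)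
    (s := range (fun j ↦ P.p j - P.p i) \ {0}) (finite_range _).sdiff fun h ↦ h.2 rfl
  refine ⟨d, hd₁, hd₂, fun t ht ⟨j, hj⟩ ↦ ?_⟩
  have hjt : P.p j - P.p i = t • d := by rw [hj, add_sub_cancel_left]
  have hd0 : d ≠ 0 := by
    rintro rfl
    simp [cross] at hd₁
  refine hd _ ⟨mem_range_self j, hjt ▸ smul_ne_zero ht.ne' hd0⟩ ?_
  rw [hjt, cross_smul_right, cross_self, mul_zero]

variable [Nontrivial (ZMod m)]

lemma PosOriented.exists_chord (hor : P.PosOriented) {i : ZMod m} (hi : P.IsReflex i) :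
    ∃ q j, q ∈ openSegment ℝ (P.p j) (P.p (j + 1)) ∧
      (∀ X ∈ openSegment ℝ (P.p i) q, X ∉ P.boundary ∧ P.wind X = 1) ∧
      0 < cross (P.edgeVec (i - 1)) (q - P.p i) ∧ 0 < cross (P.edgeVec i) (q - P.p i) ∧
      0 < cross (P.edgeVec j) (P.p i - q) := by
  obtain ⟨n, hn⟩ := exists_forall_hasSideWinding P
  obtain rfl := (posOriented_iff hn).1 hor
  obtain ⟨d, hd₁, hd₂, hvert⟩ := hi.exists_generic_ray
  have hd0 : d ≠ 0 := by
    rintro rfl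
    simp [cross] at hd₁
  have hstart := hi.eventually_wind_eq (hn i) hd₂
  simp only [Int.cast_zero, zero_add] at hstart
  obtain ⟨s, ⟨-, hsw⟩, hs⟩ := (hstart.and self_mem_nhdsWithin).exists
  obtain ⟨T, hT, hTP⟩ :=
    exists_mem_boundary_of_wind_ne_zero hs (by rw [hsw]; exact one_ne_zero) hd0
  obtain ⟨t, ht, hoff, j, hj, hdj⟩ :=
    exists_first_hit (hstart.mono fun _ h ↦ h.1) hvert hT hTP
  obtain ⟨u, ⟨-, huw⟩, hu⟩ := (hstart.and (Ioo_mem_nhdsGT ht)).exists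
  have hdj_neg : cross (P.edgeVec j) d < 0 := by
    by_contra hdj_pos
    have := wind_eq_of_hit ht hoff (hn j) hj hdj hu
    rw [huw, if_neg hdj_pos, Int.cast_zero] at this
    exact one_ne_zero this
  refine ⟨P.p i + t • d, j, hj, fun X hX ↦ ?_, ?_, ?_, ?_⟩
  · rw [openSegment_eq_image'] at hX
    obtain ⟨θ, ⟨hθ₀, hθ₁⟩, rfl⟩ := hX
    simp only [add_sub_cancel_left, smul_smul]
    have hθt : θ * t ∈ Ioo 0 t := ⟨mul_pos hθ₀ ht, mul_lt_of_lt_one_left ht hθ₁⟩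
    exact ⟨hoff _ hθt, huw ▸ wind_ray_eq isPreconnected_Ioo hoff hθt hu⟩
  · rw [add_sub_cancel_left, cross_smul_right]
    exact mul_pos ht hd₁
  · rw [add_sub_cancel_left, cross_smul_right]
    exact mul_pos ht hd₂
  · rw [sub_add_cancel_left, cross_neg_right, cross_smul_right]
    exact neg_pos.2 (mul_neg_of_pos_of_neg ht hdj_neg)

end NeZero

end SimplePolygon

/-- The closed polygonal line `w 0, …, w m = w 0` is simple. This is `SimplePolygon` with vertices
numbered by natural numbers, for cutting and pasting polygons. -/
structure IsSimpleLoop (m : ℕ) (w : ℕ → Pt) : Prop where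
  closed : w m = w 0
  injOn : InjOn w (Iio m)
  eq_of_mem_of_mem : ∀ ⦃a b x⦄, a < b → b < m → x ∈ segment ℝ (w a) (w (a + 1)) →
    x ∈ segment ℝ (w b) (w (b + 1)) → (b = a + 1 ∧ x = w b) ∨ (a = 0 ∧ b + 1 = m ∧ x = w 0)

namespace IsSimpleLoop

open Pt

variable {m : ℕ} {w : ℕ → Pt}

lemma apply_val_add_one [NeZero m] (h : IsSimpleLoop m w) (z : ZMod m) :
    w (z + 1).val = w (z.val + 1) := by
  have hz : z + 1 = ((z.val + 1 : ℕ) : ZMod m) := by rw [Nat.cast_add_one, ZMod.natCast_zmod_val]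
  rcases (Nat.succ_le_of_lt z.val_lt).lt_or_eq with hlt | heq
  · rw [hz, ZMod.val_natCast_of_lt hlt]
  · rw [hz, show z.val + 1 = m from heq, ZMod.natCast_self, ZMod.val_zero, h.closed]

lemma eq_of_mem_segment_val [NeZero m] (h : IsSimpleLoop m w) {s t : ZMod m} (hst : s ≠ t) {x : Pt}
    (hs : x ∈ segment ℝ (w s.val) (w (s + 1).val)) (ht : x ∈ segment ℝ (w t.val) (w (t + 1).val)) :
    (t = s + 1 ∧ x = w t.val) ∨ (s = t + 1 ∧ x = w s.val) := by
  wlog hlt : s.val < t.val generalizing s t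
  · exact (this hst.symm ht hs (lt_of_le_of_ne (not_lt.1 hlt)
      fun hval ↦ hst (ZMod.val_injective m hval.symm))).symm
  rw [h.apply_val_add_one] at hs ht
  refine (h.eq_of_mem_of_mem hlt t.val_lt hs ht).imp (fun ⟨hval, hx⟩ ↦ ⟨?_, hx⟩)
    fun ⟨hs0, htm, hx⟩ ↦ ⟨?_, hs0 ▸ hx⟩
  · rw [← ZMod.natCast_zmod_val t, hval, Nat.cast_add_one, ZMod.natCast_zmod_val]
  · rw [(ZMod.val_eq_zero s).1 hs0, ← ZMod.natCast_zmod_val t, ← Nat.cast_add_one, htm,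
      ZMod.natCast_self]

/-- The simple polygon traced by a simple loop. -/
def toPolygon (h : IsSimpleLoop m w) (hm : 3 ≤ m) : SimplePolygon m :=
  haveI : NeZero m := ⟨by lia⟩
  { p := fun z ↦ w z.val
    inj := fun s t hst ↦ ZMod.val_injective m (h.injOn s.val_lt t.val_lt hst)
    consec := fun i ↦ by
      have : Fact (1 < m) := ⟨by lia⟩
      have htwo : i + 1 + 1 ≠ i := by
        rw [add_assoc, one_add_one_eq_two, Ne, add_eq_left]
        exact fun h2 ↦ absurd (Nat.le_of_dvd two_pos ((ZMod.natCast_eq_zero_iff 2 m).1 h2)) (by lia)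
      refine Subset.antisymm (fun x hx ↦ ?_)
        (singleton_subset_iff.2 ⟨right_mem_segment ℝ _ _, left_mem_segment ℝ _ _⟩)
      rcases h.eq_of_mem_segment_val (by simp) hx.1 hx.2 with ⟨-, hx⟩ | ⟨hi, -⟩
      exacts [hx, absurd hi.symm htwo]
    disj := fun i j hij hij' hji ↦ by
      refine eq_empty_of_forall_notMem fun x hx ↦ ?_
      rcases h.eq_of_mem_segment_val hij hx.1 hx.2 with ⟨hj, -⟩ | ⟨hi, -⟩
      exacts [hij' hj.symm, hji hi.symm] }

variable (h : IsSimpleLoop m w) (hm : 3 ≤ m)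

lemma toPolygon_natCast {a : ℕ} (ha : a < m) : (h.toPolygon hm).p a = w a :=
  congrArg w (ZMod.val_natCast_of_lt ha)

lemma toPolygon_natCast_add_one {a : ℕ} (ha : a < m) :
    (h.toPolygon hm).p (a + 1) = w (a + 1) := by
  have : NeZero m := ⟨by lia⟩
  exact (h.apply_val_add_one a).trans (by rw [ZMod.val_natCast_of_lt ha])

lemma isReflex_toPolygon_zero : (h.toPolygon hm).IsReflex 0 ↔
    cross (w 0 - w (m - 1)) (w 1 - w 0) < 0 := by
  have hlast : (0 - 1 : ZMod m) = (m - 1 : ℕ) := by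
    rw [Nat.cast_sub (by lia), ZMod.natCast_self, Nat.cast_one]
  have hfirst := h.toPolygon_natCast_add_one hm (a := 0) (by lia)
  rw [Nat.cast_zero, zero_add] at hfirst
  rw [SimplePolygon.IsReflex, hlast, h.toPolygon_natCast hm (by lia), zero_add, hfirst,
    ← Nat.cast_zero, h.toPolygon_natCast hm (by lia)]

lemma isReflex_toPolygon_succ {a : ℕ} (ha : a + 1 < m) : (h.toPolygon hm).IsReflex (a + 1 : ℕ) ↔
    cross (w (a + 1) - w a) (w (a + 2) - w (a + 1)) < 0 := by
  have hpred : ((a + 1 : ℕ) - 1 : ZMod m) = a := by rw [Nat.cast_add_one, add_sub_cancel_right]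
  rw [SimplePolygon.IsReflex, hpred, h.toPolygon_natCast_add_one hm ha,
    h.toPolygon_natCast hm ha, h.toPolygon_natCast hm (Nat.lt_of_succ_lt ha)]

lemma edge_toPolygon {a : ℕ} (ha : a < m) :
    (h.toPolygon hm).edge a = segment ℝ (w a) (w (a + 1)) := by
  rw [SimplePolygon.edge, h.toPolygon_natCast hm ha, h.toPolygon_natCast_add_one hm ha]

lemma boundary_toPolygon :
    (h.toPolygon hm).boundary = ⋃ a < m, segment ℝ (w a) (w (a + 1)) := by
  have : NeZero m := ⟨by lia⟩
  ext x
  simp only [SimplePolygon.boundary, mem_iUnion]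
  constructor
  · rintro ⟨z, hz⟩
    rw [← ZMod.natCast_zmod_val z, h.edge_toPolygon hm z.val_lt] at hz
    exact ⟨z.val, z.val_lt, hz⟩
  · rintro ⟨a, ha, hx⟩
    exact ⟨a, (h.edge_toPolygon hm ha).symm ▸ hx⟩

lemma vertexSet_toPolygon : (h.toPolygon hm).vertexSet = w '' Iio m := by
  have : NeZero m := ⟨by lia⟩
  refine Subset.antisymm (range_subset_iff.2 fun z ↦ ⟨z.val, z.val_lt, rfl⟩) ?_
  rintro - ⟨a, ha, rfl⟩
  exact ⟨a, h.toPolygon_natCast hm ha⟩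

lemma wind_toPolygon [NeZero m] (X : Pt) : (h.toPolygon hm).wind X =
    (∑ a ∈ Finset.range m, signedAngle X (w a) (w (a + 1))) / (2 * Real.pi) := by
  rw [SimplePolygon.wind, ← SimplePolygon.sum_range_natCast]
  refine congrArg (· / _) (Finset.sum_congr rfl fun a ha ↦ ?_)
  rw [h.toPolygon_natCast hm (Finset.mem_range.1 ha),
    h.toPolygon_natCast_add_one hm (Finset.mem_range.1 ha)]

end IsSimpleLoop

namespace SimplePolygon

open Pt

variable {m : ℕ} {P : SimplePolygon m} {i : ZMod m} {k : ℕ} {q : Pt}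

lemma eq_of_add_natCast_eq {a b : ℕ} (ha : a < m) (hb : b < m)
    (h : i + (a : ZMod m) = i + (b : ZMod m)) : a = b :=
  CharP.natCast_injOn_Iio (ZMod m) m ha hb (add_left_cancel h)

/-- The part of the boundary traced by the `k` edges that follow the vertex `p i`. -/
def arc (P : SimplePolygon m) (i : ZMod m) (k : ℕ) : Set Pt := ⋃ a < k, P.edge (i + a)

lemma mem_arc {x : Pt} : x ∈ P.arc i k ↔ ∃ a < k, x ∈ P.edge (i + a) := by
  simp only [arc, mem_iUnion, exists_prop]

lemma arc_subset_boundary (P : SimplePolygon m) (i : ZMod m) (k : ℕ) : P.arc i k ⊆ P.boundary :=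
  iUnion₂_subset fun a _ ↦ edge_subset_boundary (i + (a : ZMod m))

lemma eq_or_eq_succ_of_vertex_mem_edge {a b : ℕ} (ha : a + 1 < m) (hb : b < m)
    (h : P.p (i + b) ∈ P.edge (i + a)) : b = a ∨ b = a + 1 := by
  by_contra! hne
  refine vertex_notMem_edge
    (fun heq ↦ hne.1 (eq_of_add_natCast_eq hb (Nat.lt_of_succ_lt ha) heq)) (fun heq ↦ ?_) h
  rw [add_assoc, ← Nat.cast_add_one] at heq
  exact hne.2 (eq_of_add_natCast_eq hb ha heq)

lemma le_of_vertex_mem_arc {b : ℕ} (hk : k < m) (hb : b < m) (h : P.p (i + b) ∈ P.arc i k) :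
    b ≤ k := by
  obtain ⟨a, ha, hmem⟩ := mem_arc.1 h
  rcases eq_or_eq_succ_of_vertex_mem_edge (Nat.lt_of_le_of_lt ha hk) hb hmem with rfl | rfl
  exacts [ha.le, ha]

/-- The conditions under which the arc of `k` edges from `p i` to `p (i + k)`, closed up through the
new vertex `q`, is a simple polygon. -/
structure IsCap (P : SimplePolygon m) (i : ZMod m) (k : ℕ) (q : Pt) : Prop where
  pos : 0 < k
  lt : k < m
  notMem_vertexSet : q ∉ P.vertexSet
  eq_last : ∀ ⦃x⦄, x ∈ segment ℝ (P.p (i + k)) q → x ∈ P.arc i k → x = P.p (i + k)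
  eq_first : ∀ ⦃x⦄, x ∈ segment ℝ q (P.p i) → x ∈ P.arc i k → x = P.p i
  eq_apex : ∀ ⦃x⦄, x ∈ segment ℝ (P.p (i + k)) q → x ∈ segment ℝ q (P.p i) → x = q

/-- The vertices `p i, …, p (i + k), q, p i` of the cap of `IsCap`. -/
def capPath (P : SimplePolygon m) (i : ZMod m) (k : ℕ) (q : Pt) (a : ℕ) : Pt :=
  if a ≤ k then P.p (i + a) else if a = k + 1 then q else P.p i

lemma capPath_of_le {a : ℕ} (ha : a ≤ k) : P.capPath i k q a = P.p (i + a) := if_pos ha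

lemma capPath_zero : P.capPath i k q 0 = P.p i := by
  rw [capPath_of_le k.zero_le, Nat.cast_zero, add_zero]

lemma capPath_apex : P.capPath i k q (k + 1) = q := by simp [capPath]

lemma capPath_closed : P.capPath i k q (k + 1 + 1) = P.p i := by simp [capPath]

lemma segment_capPath_of_lt {a : ℕ} (ha : a < k) :
    segment ℝ (P.capPath i k q a) (P.capPath i k q (a + 1)) = P.edge (i + a) := by
  rw [capPath_of_le ha.le, capPath_of_le ha, edge, Nat.cast_add_one, add_assoc]

namespace IsCap

variable (h : P.IsCap i k q)
include h

lemma injOn_capPath : InjOn (P.capPath i k q) (Iio (k + 2)) := by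
  have hq {a : ℕ} (ha : a ≤ k) : P.capPath i k q a ≠ q :=
    capPath_of_le (P := P) ha ▸ fun haq ↦ h.notMem_vertexSet ⟨_, haq⟩
  intro a ha b hb hab
  rcases (Nat.lt_succ_iff.1 ha).lt_or_eq with ha | rfl <;>
  rcases (Nat.lt_succ_iff.1 hb).lt_or_eq with hb | rfl
  · rw [capPath_of_le (by lia), capPath_of_le (by lia)] at hab
    exact eq_of_add_natCast_eq (by have := h.lt; lia) (by have := h.lt; lia) (P.inj hab)
  · exact absurd (hab.trans capPath_apex) (hq (by lia))
  · exact absurd (hab.symm.trans capPath_apex) (hq (by lia))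
  · rfl

lemma isSimpleLoop_capPath : IsSimpleLoop (k + 2) (P.capPath i k q) := by
  have hlt := h.lt
  refine ⟨capPath_closed.trans capPath_zero.symm, h.injOn_capPath, fun a b x hab hb hxa hxb ↦ ?_⟩
  have hmem : a < k → x ∈ P.arc i k := fun ha ↦
    mem_arc.2 ⟨a, ha, segment_capPath_of_lt (q := q) ha ▸ hxa⟩
  obtain hbk | rfl | rfl : b < k ∨ b = k ∨ b = k + 1 := by lia
  · rw [segment_capPath_of_lt (by lia)] at hxa hxb
    rcases eq_of_mem_edge_of_mem_edge (fun heq ↦ hab.ne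
      (eq_of_add_natCast_eq (by lia) (by lia) heq)) hxa hxb with ⟨heq, hx⟩ | ⟨heq, -⟩
    · rw [add_assoc, ← Nat.cast_add_one] at heq
      exact .inl ⟨eq_of_add_natCast_eq (by lia) (by lia) heq, by rwa [capPath_of_le hbk.le]⟩
    · rw [add_assoc, ← Nat.cast_add_one] at heq
      have := eq_of_add_natCast_eq (by lia) (by lia) heq
      lia
  · rw [capPath_apex, capPath_of_le le_rfl] at hxb
    obtain rfl := h.eq_last hxb (hmem hab)
    rw [segment_capPath_of_lt hab] at hxa
    have := eq_or_eq_succ_of_vertex_mem_edge (by lia) hlt hxa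
    exact .inl ⟨by lia, (capPath_of_le le_rfl).symm⟩
  · rw [capPath_apex, capPath_closed] at hxb
    rcases (Nat.lt_succ_iff.1 hab).lt_or_eq with ha | rfl
    · obtain rfl := h.eq_first hxb (hmem ha)
      rw [segment_capPath_of_lt ha] at hxa
      have := eq_or_eq_succ_of_vertex_mem_edge (i := i) (a := a) (b := 0) (by lia) (by lia)
        (by simpa using hxa)
      exact .inr ⟨by lia, rfl, capPath_zero.symm⟩
    · rw [capPath_apex, capPath_of_le le_rfl] at hxa
      exact .inl ⟨rfl, (h.eq_apex hxa hxb).trans capPath_apex.symm⟩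

/-- The polygon cut off by the two segments from `q` to the ends of the arc. -/
def polygon : SimplePolygon (k + 2) :=
  h.isSimpleLoop_capPath.toPolygon (by have := h.pos; lia)

lemma polygon_natCast {a : ℕ} (ha : a < k + 2) : h.polygon.p a = P.capPath i k q a :=
  h.isSimpleLoop_capPath.toPolygon_natCast _ ha

lemma polygon_natCast_add_one {a : ℕ} (ha : a < k + 2) :
    h.polygon.p (a + 1) = P.capPath i k q (a + 1) :=
  h.isSimpleLoop_capPath.toPolygon_natCast_add_one _ ha

lemma boundary_polygon : h.polygon.boundary =
    P.arc i k ∪ segment ℝ (P.p (i + k)) q ∪ segment ℝ q (P.p i) := by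
  rw [polygon, h.isSimpleLoop_capPath.boundary_toPolygon, biUnion_lt_succ, biUnion_lt_succ,
    capPath_apex, capPath_closed, capPath_of_le le_rfl, arc]
  exact congrArg (· ∪ _ ∪ _) (iUnion₂_congr fun _ ha ↦ segment_capPath_of_lt ha)

lemma vertexSet_polygon :
    h.polygon.vertexSet = insert q ((fun a : ℕ ↦ P.p (i + a)) '' Iic k) := by
  have hIio : Iio (k + 2) = insert (k + 1) (Iic k) := by
    ext a
    simp only [mem_Iio, mem_insert_iff, mem_Iic]
    lia
  rw [polygon, h.isSimpleLoop_capPath.vertexSet_toPolygon, hIio, image_insert_eq, capPath_apex]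
  exact congrArg (insert q) (image_congr fun _ ha ↦ capPath_of_le ha)

lemma wind_polygon (X : Pt) : h.polygon.wind X =
    (∑ a ∈ Finset.range k, signedAngle X (P.p (i + a)) (P.p (i + a + 1)) +
      signedAngle X (P.p (i + k)) q + signedAngle X q (P.p i)) / (2 * Real.pi) := by
  rw [polygon, h.isSimpleLoop_capPath.wind_toPolygon, Finset.sum_range_succ, Finset.sum_range_succ,
    capPath_apex, capPath_closed, capPath_of_le le_rfl]
  congr 3
  refine Finset.sum_congr rfl fun a ha ↦ ?_
  rw [capPath_of_le (Finset.mem_range.1 ha).le, capPath_of_le (Finset.mem_range.1 ha),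
    Nat.cast_add_one, add_assoc]

lemma mem_reflexSet_polygon {x : Pt} (hx : x ∈ h.polygon.reflexSet) :
    (x = P.p i ∧ cross (P.p i - q) (P.edgeVec i) < 0) ∨
    (∃ a, 0 < a ∧ a < k ∧ P.IsReflex (i + a) ∧ x = P.p (i + a)) ∨
    (x = P.p (i + k) ∧ cross (P.edgeVec (i + k - 1)) (q - P.p (i + k)) < 0) ∨
    (x = q ∧ cross (q - P.p (i + k)) (P.p i - q) < 0) := by
  obtain ⟨z, hz, rfl⟩ := hx
  obtain ⟨a, ha, rfl⟩ : ∃ a < k + 2, (a : ZMod (k + 2)) = z :=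
    ⟨z.val, z.val_lt, ZMod.natCast_zmod_val z⟩
  have hk := h.pos
  rw [h.polygon_natCast ha]
  have hsucc {b : ℕ} (hb : b + 1 ≤ k) :
      P.capPath i k q (b + 1) - P.capPath i k q b = P.edgeVec (i + b) := by
    rw [capPath_of_le hb, capPath_of_le (by lia), edgeVec, add_assoc, Nat.cast_add_one]
  rcases a with - | a
  · rw [Nat.cast_zero, polygon, IsSimpleLoop.isReflex_toPolygon_zero, hsucc (by lia),
      Nat.cast_zero, add_zero, capPath_zero, show k + 2 - 1 = k + 1 from rfl,
      capPath_apex] at hz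
    exact .inl ⟨capPath_zero, hz⟩
  rw [polygon, IsSimpleLoop.isReflex_toPolygon_succ _ _ ha] at hz
  obtain hak | rfl | rfl : a + 1 < k ∨ a + 1 = k ∨ a = k := by lia
  · rw [hsucc hak.le, hsucc hak] at hz
    refine .inr (.inl ⟨a + 1, a.succ_pos, hak, isReflex_iff.2 ?_, capPath_of_le hak.le⟩)
    rwa [Nat.cast_add_one, ← add_assoc, add_sub_cancel_right, add_assoc, ← Nat.cast_add_one]
  · rw [hsucc le_rfl, capPath_apex, capPath_of_le le_rfl] at hz
    refine .inr (.inr (.inl ⟨capPath_of_le le_rfl, ?_⟩))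
    rwa [show i + ((a + 1 : ℕ) : ZMod m) - 1 = i + a by rw [Nat.cast_add_one]; ring]
  · rw [capPath_apex, capPath_closed, capPath_of_le le_rfl] at hz
    exact .inr (.inr (.inr ⟨capPath_apex, hz⟩))

end IsCap

end SimplePolygon

section Segment

variable {E : Type*} [AddCommGroup E] [Module ℝ E] {a b q x : E}

lemma segment_union_segment (hq : q ∈ segment ℝ a b) :
    segment ℝ a q ∪ segment ℝ q b = segment ℝ a b := by
  refine Subset.antisymm (union_subset ?_ ?_) ?_
  · exact (convex_segment a b).segment_subset (left_mem_segment ℝ a b) hq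
  · exact (convex_segment a b).segment_subset hq (right_mem_segment ℝ a b)
  · rw [← insert_endpoints_openSegment]
    rintro x (rfl | rfl | hx)
    · exact .inl (left_mem_segment ℝ _ _)
    · exact .inr (right_mem_segment ℝ _ _)
    · rw [segment_eq_image_lineMap] at hq
      rcases openSegment_subset_union a b (image_subset_range _ _ hq) hx with rfl | hx | hx
      · exact .inl (right_mem_segment ℝ _ _)
      · exact .inl (openSegment_subset_segment ℝ _ _ hx)
      · exact .inr (openSegment_subset_segment ℝ _ _ hx)

lemma eq_of_mem_segment_of_mem_segment (hq : q ∈ segment ℝ a b) (hx : x ∈ segment ℝ a q)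
    (hx' : x ∈ segment ℝ q b) : x = q := by
  rw [mem_segment_iff_wbtw] at *
  exact wbtw_swap_right_iff ℝ a |>.1 ⟨hx, hq.trans_right_left hx'⟩

lemma right_notMem_segment_of_mem_openSegment (hab : a ≠ b) (hq : q ∈ openSegment ℝ a b) :
    b ∉ segment ℝ a q := fun hb ↦ by
  obtain rfl := eq_of_mem_segment_of_mem_segment (openSegment_subset_segment ℝ _ _ hq) hb
    (right_mem_segment ℝ _ _)
  exact hab (right_mem_openSegment_iff.1 hq)

end Segment

namespace SimplePolygon

open Pt

variable {m : ℕ} {P : SimplePolygon m}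

section HalfEdge

variable [Nontrivial (ZMod m)] {j t : ZMod m} {q x : Pt}

lemma eq_of_mem_half_edge_left (hq : q ∈ openSegment ℝ (P.p j) (P.p (j + 1)))
    (hx : x ∈ segment ℝ (P.p j) q) (hjt : j ≠ t) (hxt : x ∈ P.edge t) : x = P.p j := by
  have hxj : x ∈ P.edge j := (convex_segment _ _).segment_subset (left_mem_segment ℝ _ _)
    (openSegment_subset_segment ℝ _ _ hq) hx
  rcases eq_of_mem_edge_of_mem_edge hjt hxj hxt with ⟨rfl, rfl⟩ | ⟨-, hx⟩
  · exact absurd hx (right_notMem_segment_of_mem_openSegment (vertex_ne_succ j) hq)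
  · exact hx

lemma eq_of_mem_half_edge_right (hq : q ∈ openSegment ℝ (P.p j) (P.p (j + 1)))
    (hx : x ∈ segment ℝ q (P.p (j + 1))) (hjt : j ≠ t) (hxt : x ∈ P.edge t) :
    x = P.p (j + 1) := by
  have hxj : x ∈ P.edge j := (convex_segment _ _).segment_subset
    (openSegment_subset_segment ℝ _ _ hq) (right_mem_segment ℝ _ _) hx
  rcases eq_of_mem_edge_of_mem_edge hjt hxj hxt with ⟨rfl, hx⟩ | ⟨-, rfl⟩
  · exact hx
  · rw [openSegment_symm] at hq
    rw [segment_symm] at hx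
    exact absurd hx (right_notMem_segment_of_mem_openSegment (vertex_ne_succ j).symm hq)

end HalfEdge

/-- The segment from the vertex `p i` to a point `q` inside the edge `j`, whose interior avoids the
boundary. The numbers `k` and `k'` of edges from `p i` to `p j` and from `p (j + 1)` to `p i` are
carried along as parameters. -/
structure IsChord (P : SimplePolygon m) (i j : ZMod m) (k k' : ℕ) (q : Pt) : Prop where
  add_first : i + k = j
  add_second : j + 1 + k' = i
  length_eq : k + k' + 1 = m
  mem_openSegment : q ∈ openSegment ℝ (P.p j) (P.p (j + 1))
  notMem_boundary : ∀ ⦃x⦄, x ∈ openSegment ℝ (P.p i) q → x ∉ P.boundary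

lemma exists_isChord [NeZero m] {i j : ZMod m} {q : Pt}
    (hq : q ∈ openSegment ℝ (P.p j) (P.p (j + 1)))
    (hdisj : ∀ ⦃x⦄, x ∈ openSegment ℝ (P.p i) q → x ∉ P.boundary) :
    ∃ k k', P.IsChord i j k k' q := by
  refine ⟨(j - i).val, (i - (j + 1)).val, ?_, ?_, ?_, hq, hdisj⟩
  · rw [ZMod.natCast_zmod_val, add_sub_cancel]
  · rw [ZMod.natCast_zmod_val, add_sub_cancel]
  · have hdvd : m ∣ (j - i).val + (i - (j + 1)).val + 1 := by
      rw [← ZMod.natCast_eq_zero_iff, Nat.cast_add_one, Nat.cast_add, ZMod.natCast_zmod_val,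
        ZMod.natCast_zmod_val]
      ring
    have h₁ := (j - i).val_lt
    have h₂ := (i - (j + 1)).val_lt
    obtain ⟨c, hc⟩ := hdvd
    obtain rfl : c = 1 := by nlinarith
    lia

namespace IsChord

variable {i j : ZMod m} {k k' : ℕ} {q : Pt} (h : P.IsChord i j k k' q)
include h

lemma mem_edge : q ∈ P.edge j := openSegment_subset_segment ℝ _ _ h.mem_openSegment

lemma start_notMem_edge : P.p i ∉ P.edge j := fun hi ↦ by
  have hmid := midpoint_mem_openSegment (𝕜 := ℝ) (P.p i) q
  exact h.notMem_boundary hmid (edge_subset_boundary j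
    ((convex_segment _ _).openSegment_subset hi h.mem_edge hmid))

lemma pos_first : 0 < k := Nat.pos_of_ne_zero fun hk ↦ h.start_notMem_edge <| by
  rw [← h.add_first, hk, Nat.cast_zero, add_zero]
  exact left_mem_segment ℝ _ _

lemma pos_second : 0 < k' := Nat.pos_of_ne_zero fun hk ↦ h.start_notMem_edge <| by
  rw [← h.add_second, hk, Nat.cast_zero, add_zero]
  exact right_mem_segment ℝ _ _

lemma eq_or_eq_of_mem_boundary {x : Pt} (hx : x ∈ segment ℝ (P.p i) q) (hxP : x ∈ P.boundary) :
    x = P.p i ∨ x = q := by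
  rw [← insert_endpoints_openSegment] at hx
  rcases hx with hx | hx | hx
  exacts [.inl hx, .inr hx, absurd hxP (h.notMem_boundary hx)]

lemma eq_start_of_mem_boundary_of_ne {x : Pt} (hx : x ∈ segment ℝ (P.p i) q)
    (hxP : x ∈ P.boundary) (hxq : x ≠ q) : x = P.p i :=
  (h.eq_or_eq_of_mem_boundary hx hxP).resolve_right hxq

lemma eq_apex_of_mem_edge {x : Pt} (hx : x ∈ segment ℝ (P.p i) q) (hxj : x ∈ P.edge j) : x = q :=
  (h.eq_or_eq_of_mem_boundary hx (edge_subset_boundary j hxj)).resolve_left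
    fun hxi ↦ h.start_notMem_edge (hxi ▸ hxj)

lemma ne_first {a : ℕ} (ha : a < k) : j ≠ i + a := fun heq ↦ by
  have hlt := h.length_eq
  exact ha.ne (eq_of_add_natCast_eq (by lia) (by lia) (heq.symm.trans h.add_first.symm))

lemma ne_second {b : ℕ} (hb : b < k') : j ≠ j + 1 + b := fun heq ↦ by
  have hlt := h.length_eq
  have heq' : j + ((0 : ℕ) : ZMod m) = j + (b + 1 : ℕ) := by
    rw [Nat.cast_zero, add_zero, Nat.cast_add_one, add_comm (b : ZMod m), ← add_assoc, ← heq]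
  exact b.succ_ne_zero (eq_of_add_natCast_eq (by lia) (by lia) heq').symm

section Nontrivial

variable [Nontrivial (ZMod m)]

lemma apex_notMem_arc_first : q ∉ P.arc i k := fun hq ↦ by
  obtain ⟨a, ha, hq⟩ := mem_arc.1 hq
  exact notMem_edge_of_mem_openSegment (h.ne_first ha) h.mem_openSegment hq

lemma apex_notMem_arc_second : q ∉ P.arc (j + 1) k' := fun hq ↦ by
  obtain ⟨b, hb, hq⟩ := mem_arc.1 hq
  exact notMem_edge_of_mem_openSegment (h.ne_second hb) h.mem_openSegment hq

lemma eq_of_mem_arc_first {x : Pt} (hx : x ∈ segment ℝ (P.p j) q) (hx₁ : x ∈ P.arc i k) :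
    x = P.p j := by
  obtain ⟨a, ha, hxa⟩ := mem_arc.1 hx₁
  exact eq_of_mem_half_edge_left h.mem_openSegment hx (h.ne_first ha) hxa

lemma eq_of_mem_arc_second {x : Pt} (hx : x ∈ segment ℝ q (P.p (j + 1)))
    (hx₂ : x ∈ P.arc (j + 1) k') : x = P.p (j + 1) := by
  obtain ⟨b, hb, hxb⟩ := mem_arc.1 hx₂
  exact eq_of_mem_half_edge_right h.mem_openSegment hx (h.ne_second hb) hxb

lemma isCap_first : P.IsCap i k q where
  pos := h.pos_first
  lt := by have := h.length_eq; lia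
  notMem_vertexSet := notMem_vertexSet_of_mem_openSegment h.mem_openSegment
  eq_last x hx hx₁ := by
    rw [h.add_first] at hx ⊢
    exact h.eq_of_mem_arc_first hx hx₁
  eq_first x hx hx₁ := by
    rw [segment_symm] at hx
    exact h.eq_start_of_mem_boundary_of_ne hx (arc_subset_boundary P i k hx₁)
      fun hxq ↦ h.apex_notMem_arc_first (hxq ▸ hx₁)
  eq_apex x hx hx' := by
    rw [h.add_first] at hx
    rw [segment_symm] at hx'
    exact h.eq_apex_of_mem_edge hx'
      ((convex_segment _ _).segment_subset (left_mem_segment ℝ _ _) h.mem_edge hx)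

lemma isCap_second : P.IsCap (j + 1) k' q where
  pos := h.pos_second
  lt := by have := h.length_eq; lia
  notMem_vertexSet := notMem_vertexSet_of_mem_openSegment h.mem_openSegment
  eq_last x hx hx₂ := by
    rw [h.add_second] at hx ⊢
    exact h.eq_start_of_mem_boundary_of_ne hx (arc_subset_boundary P (j + 1) k' hx₂)
      fun hxq ↦ h.apex_notMem_arc_second (hxq ▸ hx₂)
  eq_first x hx hx₂ := h.eq_of_mem_arc_second hx hx₂
  eq_apex x hx hx' := by
    rw [h.add_second] at hx
    exact h.eq_apex_of_mem_edge hx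
      ((convex_segment _ _).segment_subset h.mem_edge (right_mem_segment ℝ _ _) hx')

end Nontrivial

end IsChord

end SimplePolygon

namespace SimplePolygon.IsChord

open Pt

variable {m : ℕ} {P : SimplePolygon m} {i j : ZMod m} {k k' : ℕ} {q : Pt} (h : P.IsChord i j k k' q)
include h

lemma second_eq_first (b : ℕ) : j + 1 + b = i + (k + 1 + b : ℕ) := by
  rw [← h.add_first]
  push_cast
  ring

lemma first_eq_start_of_eq_second {a b : ℕ} (ha : a ≤ k) (hb : b ≤ k') (hab : i + a = j + 1 + b) :
    i + a = i := by
  have hm := h.length_eq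
  rw [h.second_eq_first] at hab
  obtain hlt | heq : k + 1 + b < m ∨ k + 1 + b = m := by lia
  · have := eq_of_add_natCast_eq (by lia) hlt hab
    lia
  · rw [hab, heq, ZMod.natCast_self, add_zero]

lemma sum_eq [NeZero m] {M : Type*} [AddCommMonoid M] (f : ZMod m → M) : ∑ t, f t =
    ∑ a ∈ Finset.range k, f (i + a) + f j + ∑ b ∈ Finset.range k', f (j + 1 + b) := by
  have hm : m = k + 1 + k' := by have := h.length_eq; lia
  rw [← Equiv.sum_comp (Equiv.addLeft i), ← sum_range_natCast, congrArg Finset.range hm,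
    Finset.sum_range_add, Finset.sum_range_succ]
  simp only [Equiv.coe_addLeft, h.add_first, h.second_eq_first]

lemma exists_index [NeZero m] (t : ZMod m) :
    (∃ a < k, t = i + a) ∨ t = j ∨ ∃ b < k', t = j + 1 + b := by
  have hm := h.length_eq
  obtain ⟨c, hc, rfl⟩ : ∃ c < m, i + (c : ZMod m) = t :=
    ⟨(t - i).val, (t - i).val_lt, by rw [ZMod.natCast_zmod_val, add_sub_cancel]⟩
  obtain hck | rfl | hck : c < k ∨ c = k ∨ k < c := by lia
  · exact .inl ⟨c, hck, rfl⟩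
  · exact .inr (.inl h.add_first)
  · refine .inr (.inr ⟨c - k - 1, by lia, ?_⟩)
    rw [h.second_eq_first, show k + 1 + (c - k - 1) = c by lia]

lemma boundary_eq [NeZero m] : P.boundary = P.arc i k ∪ P.edge j ∪ P.arc (j + 1) k' := by
  refine Subset.antisymm (iUnion_subset fun t x hx ↦ ?_) (union_subset
    (union_subset (arc_subset_boundary P i k) (edge_subset_boundary j))
    (arc_subset_boundary P (j + 1) k'))
  rcases h.exists_index t with ⟨a, ha, rfl⟩ | rfl | ⟨b, hb, rfl⟩
  · exact .inl (.inl (mem_arc.2 ⟨a, ha, hx⟩))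
  · exact .inl (.inr hx)
  · exact .inr (mem_arc.2 ⟨b, hb, hx⟩)

lemma end_notMem_arc_first : P.p (j + 1) ∉ P.arc i k := fun hj ↦ by
  have hm := h.length_eq
  have hk' := h.pos_second
  have heq := h.second_eq_first 0
  rw [Nat.cast_zero, add_zero] at heq
  rw [heq] at hj
  have := le_of_vertex_mem_arc (by lia) (by lia) hj
  lia

lemma start_notMem_arc_second : P.p j ∉ P.arc (j + 1) k' := fun hj ↦ by
  have hm := h.length_eq
  have hk := h.pos_first
  have heq : j = j + 1 + (k' + k : ℕ) := by
    rw [Nat.cast_add, ← add_assoc, h.add_second, h.add_first]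
  have hj' : P.p (j + 1 + (k' + k : ℕ)) ∈ P.arc (j + 1) k' := by rwa [← heq]
  have := le_of_vertex_mem_arc (by lia) (by lia) hj'
  lia

lemma eq_start_of_mem_arcs {x : Pt} (hx₁ : x ∈ P.arc i k) (hx₂ : x ∈ P.arc (j + 1) k') :
    x = P.p i := by
  obtain ⟨a, ha, hxa⟩ := mem_arc.1 hx₁
  obtain ⟨b, hb, hxb⟩ := mem_arc.1 hx₂
  by_cases hab : i + (a : ZMod m) = j + 1 + b
  · have hi := h.first_eq_start_of_eq_second ha.le hb.le hab
    have hb' := hab.symm.trans (hi.trans h.add_second.symm)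
    have hm := h.length_eq
    exact absurd (eq_of_add_natCast_eq (by lia) (by lia) hb') hb.ne
  rcases eq_of_mem_edge_of_mem_edge hab hxa hxb with ⟨heq, rfl⟩ | ⟨heq, rfl⟩
  · rw [add_assoc i, ← Nat.cast_add_one] at heq
    rw [heq, h.first_eq_start_of_eq_second ha hb.le heq.symm]
  · rw [add_assoc, ← Nat.cast_add_one] at heq
    rw [h.first_eq_start_of_eq_second ha.le hb heq]

variable [Nontrivial (ZMod m)]

/-- The piece bounded by the arc from `p i` to `p j` and by the chord. -/
def firstPiece : SimplePolygon (k + 2) := h.isCap_first.polygon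

/-- The piece bounded by the arc from `p (j + 1)` to `p i` and by the chord. -/
def secondPiece : SimplePolygon (k' + 2) := h.isCap_second.polygon

lemma boundary_firstPiece : h.firstPiece.boundary =
    P.arc i k ∪ segment ℝ (P.p j) q ∪ segment ℝ (P.p i) q := by
  rw [firstPiece, h.isCap_first.boundary_polygon, h.add_first, segment_symm ℝ q]

lemma boundary_secondPiece : h.secondPiece.boundary =
    P.arc (j + 1) k' ∪ segment ℝ q (P.p (j + 1)) ∪ segment ℝ (P.p i) q := by
  rw [secondPiece, h.isCap_second.boundary_polygon, h.add_second, union_right_comm]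

lemma boundary_union [NeZero m] : h.firstPiece.boundary ∪ h.secondPiece.boundary =
    P.boundary ∪ segment ℝ (P.p i) q := by
  rw [h.boundary_firstPiece, h.boundary_secondPiece, h.boundary_eq, edge,
    ← segment_union_segment h.mem_edge]
  ext x
  simp only [mem_union]
  tauto

lemma boundary_inter :
    h.firstPiece.boundary ∩ h.secondPiece.boundary = segment ℝ (P.p i) q := by
  rw [h.boundary_firstPiece, h.boundary_secondPiece, ← inter_union_distrib_right,
    union_eq_right]
  rintro x ⟨hx₁ | hx₁, hx₂ | hx₂⟩
  · exact h.eq_start_of_mem_arcs hx₁ hx₂ ▸ left_mem_segment ℝ _ _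
  · obtain ⟨a, ha, hxa⟩ := mem_arc.1 hx₁
    obtain rfl := eq_of_mem_half_edge_right h.mem_openSegment hx₂ (h.ne_first ha) hxa
    exact absurd hx₁ h.end_notMem_arc_first
  · obtain ⟨b, hb, hxb⟩ := mem_arc.1 hx₂
    obtain rfl := eq_of_mem_half_edge_left h.mem_openSegment hx₁ (h.ne_second hb) hxb
    exact absurd hx₂ h.start_notMem_arc_second
  · exact eq_of_mem_segment_of_mem_segment h.mem_edge hx₁ hx₂ ▸ right_mem_segment ℝ _ _

lemma vertexSet_firstPiece :
    h.firstPiece.vertexSet = insert q ((fun a : ℕ ↦ P.p (i + a)) '' Iic k) :=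
  h.isCap_first.vertexSet_polygon

lemma vertexSet_secondPiece :
    h.secondPiece.vertexSet = insert q ((fun b : ℕ ↦ P.p (j + 1 + b)) '' Iic k') :=
  h.isCap_second.vertexSet_polygon

lemma vertexSet_union [NeZero m] :
    h.firstPiece.vertexSet ∪ h.secondPiece.vertexSet = P.vertexSet ∪ {q} := by
  rw [h.vertexSet_firstPiece, h.vertexSet_secondPiece, ← insert_union_distrib, union_singleton]
  refine congrArg (insert q) (Subset.antisymm ?_ (range_subset_iff.2 fun t ↦ ?_))
  · rintro x (⟨a, -, rfl⟩ | ⟨b, -, rfl⟩) <;> exact mem_range_self _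
  · rcases h.exists_index t with ⟨a, ha, rfl⟩ | rfl | ⟨b, hb, rfl⟩
    · exact .inl ⟨a, ha.le, rfl⟩
    · exact .inl ⟨k, mem_Iic.2 le_rfl, congrArg P.p h.add_first⟩
    · exact .inr ⟨b, hb.le, rfl⟩

lemma vertexSet_inter :
    h.firstPiece.vertexSet ∩ h.secondPiece.vertexSet = {P.p i, q} := by
  rw [h.vertexSet_firstPiece, h.vertexSet_secondPiece, ← insert_inter_distrib, pair_comm]
  refine congrArg (insert q) (Subset.antisymm ?_ (singleton_subset_iff.2 ⟨⟨0, ?_, ?_⟩, k', ?_, ?_⟩))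
  · rintro - ⟨⟨a, ha, rfl⟩, b, hb, hab⟩
    exact congrArg P.p (h.first_eq_start_of_eq_second ha hb (P.inj hab.symm))
  · exact k.zero_le
  · exact congrArg P.p (by rw [Nat.cast_zero, add_zero])
  · exact le_refl k'
  · exact congrArg P.p h.add_second

lemma wind_add_wind [NeZero m] {X : Pt} (hX : X ∉ P.boundary) (hXq : X ∉ segment ℝ (P.p i) q) :
    h.firstPiece.wind X + h.secondPiece.wind X = P.wind X := by
  rw [firstPiece, secondPiece, h.isCap_first.wind_polygon, h.isCap_second.wind_polygon, wind,
    h.sum_eq, h.add_first, h.add_second, ← signedAngle_add h.mem_edge (notMem_edge hX j),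
    signedAngle_swap hXq]
  ring

end SimplePolygon.IsChord

namespace SimplePolygon.IsChord

open Pt

variable {m : ℕ} {P : SimplePolygon m} {i j : ZMod m} {k k' : ℕ} {q : Pt} (h : P.IsChord i j k k' q)
include h

lemma exists_smul_edgeVec :
    ∃ θ : ℝ, 0 < θ ∧ θ < 1 ∧ q - P.p j = θ • P.edgeVec j ∧
      P.p (j + 1) - q = (1 - θ) • P.edgeVec j := by
  have hq := h.mem_openSegment
  rw [openSegment_eq_image'] at hq
  obtain ⟨θ, ⟨hθ₀, hθ₁⟩, rfl⟩ := hq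
  refine ⟨θ, hθ₀, hθ₁, add_sub_cancel_left _ _, ?_⟩
  rw [edgeVec]
  module

variable [Nontrivial (ZMod m)]

lemma firstPiece_edge_eq_chord :
    h.firstPiece.p (k + 1 : ℕ) = q ∧ h.firstPiece.p ((k + 1 : ℕ) + 1) = P.p i :=
  ⟨(h.isCap_first.polygon_natCast (by lia)).trans capPath_apex,
    (h.isCap_first.polygon_natCast_add_one (by lia)).trans capPath_closed⟩

lemma secondPiece_edge_eq_chord :
    h.secondPiece.p k' = P.p i ∧ h.secondPiece.p (k' + 1) = q :=
  ⟨(h.isCap_second.polygon_natCast (by lia)).trans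
    ((capPath_of_le le_rfl).trans (congrArg P.p h.add_second)),
    (h.isCap_second.polygon_natCast_add_one (by lia)).trans capPath_apex⟩

-- The two pieces traverse the chord in opposite directions, so the left of one is the right of the
-- other.
lemma wind_eq_add [NeZero m] {n₁ n₂ : ℤ} (hn₁ : h.firstPiece.HasSideWinding (k + 1 : ℕ) n₁)
    (hn₂ : h.secondPiece.HasSideWinding k' n₂) {z : Pt} (hz : z ∈ openSegment ℝ (P.p i) q) :
    P.wind z = n₁ + 1 + n₂ := by
  obtain ⟨hq₁, hi₁⟩ := h.firstPiece_edge_eq_chord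
  obtain ⟨hi₂, hq₂⟩ := h.secondPiece_edge_eq_chord
  have hz₁ : z ∈ openSegment ℝ (h.firstPiece.p (k + 1 : ℕ))
      (h.firstPiece.p ((k + 1 : ℕ) + 1)) := by
    rwa [hq₁, hi₁, openSegment_symm]
  have hz₂ : z ∈ openSegment ℝ (h.secondPiece.p k') (h.secondPiece.p (k' + 1)) := by
    rwa [hi₂, hq₂]
  have : Fact (1 < k + 2) := ⟨by lia⟩
  obtain ⟨w, hw₁⟩ := exists_cross_pos (h.firstPiece.edgeVec_ne_zero (k + 1 : ℕ))
  have hw₂ : cross (h.secondPiece.edgeVec k') w < 0 := by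
    rw [edgeVec, hq₁, hi₁] at hw₁
    rw [edgeVec, hi₂, hq₂, ← neg_sub, cross_neg_left]
    exact neg_neg_of_pos hw₁
  have hsum : ∀ᶠ t : ℝ in 𝓝[>] 0, P.wind (z + t • w) = n₁ + 1 + n₂ := by
    filter_upwards [hn₁.eventually_left hz₁ hw₁, hn₂.eventually_right hz₂ hw₂]
      with t ⟨hX₁, ht₁⟩ ⟨hX₂, ht₂⟩
    have hX : z + t • w ∉ P.boundary ∪ segment ℝ (P.p i) q :=
      h.boundary_union ▸ fun hX ↦ hX.elim hX₁ hX₂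
    rw [← ht₁, ← ht₂, h.wind_add_wind (fun hP ↦ hX (.inl hP)) fun hq ↦ hX (.inr hq)]
  have hlim := (continuousAt_wind (h.notMem_boundary hz)).tendsto.comp (tendsto_add_smul_zero z w)
  exact tendsto_nhds_unique hlim (tendsto_const_nhds.congr' (hsum.mono fun _ ht ↦ ht.symm))

lemma posOriented_pieces [NeZero m] (hw : ∀ x ∈ openSegment ℝ (P.p i) q, P.wind x = 1) :
    h.firstPiece.PosOriented ∧ h.secondPiece.PosOriented := by
  have : Fact (1 < k + 2) := ⟨by lia⟩
  have : Fact (1 < k' + 2) := ⟨by lia⟩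
  obtain ⟨n₁, hn₁⟩ := h.firstPiece.exists_forall_hasSideWinding
  obtain ⟨n₂, hn₂⟩ := h.secondPiece.exists_forall_hasSideWinding
  have hz := midpoint_mem_openSegment (𝕜 := ℝ) (P.p i) q
  have hsum : n₁ + 1 + n₂ = 1 := by
    exact_mod_cast (h.wind_eq_add (hn₁ _) (hn₂ _) hz).symm.trans (hw _ hz)
  have := eq_zero_or_eq_neg_one hn₁
  have := eq_zero_or_eq_neg_one hn₂
  exact ⟨(posOriented_iff hn₁).2 (by lia), (posOriented_iff hn₂).2 (by lia)⟩

lemma reflexSet_firstPiece_subset (hstart : 0 < cross (P.edgeVec i) (q - P.p i))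
    (hapex : 0 < cross (P.edgeVec j) (P.p i - q)) :
    h.firstPiece.reflexSet ⊆ P.reflexSet \ {P.p i} := by
  have hm := h.length_eq
  have hne {a : ℕ} (ha : 0 < a) (hak : a ≤ k) : P.p (i + a) ≠ P.p i := fun heq ↦ by
    have heq' := (P.inj heq).trans (add_zero i).symm
    rw [← Nat.cast_zero] at heq'
    exact ha.ne' (eq_of_add_natCast_eq (by lia) (by lia) heq')
  obtain ⟨θ, hθ₀, -, hθ, -⟩ := h.exists_smul_edgeVec
  intro x hx
  rcases h.isCap_first.mem_reflexSet_polygon hx with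
    ⟨-, hc⟩ | ⟨a, ha, hak, hr, rfl⟩ | ⟨rfl, hc⟩ | ⟨-, hc⟩
  · rw [cross_swap, ← neg_sub, cross_neg_right, neg_neg] at hc
    exact absurd hstart hc.not_gt
  · exact ⟨⟨_, hr, rfl⟩, hne ha hak.le⟩
  · refine ⟨⟨_, isReflex_iff.2 ?_, rfl⟩, hne h.pos_first le_rfl⟩
    rw [h.add_first] at hc ⊢
    rw [hθ, cross_smul_right] at hc
    exact neg_of_mul_neg_right hc hθ₀.le
  · rw [h.add_first, hθ, cross_smul_left] at hc
    exact absurd (mul_pos hθ₀ hapex) hc.not_gt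

lemma reflexSet_secondPiece_subset (hstart : 0 < cross (P.edgeVec (i - 1)) (q - P.p i))
    (hapex : 0 < cross (P.edgeVec j) (P.p i - q)) :
    h.secondPiece.reflexSet ⊆ P.reflexSet \ {P.p i} := by
  have hm := h.length_eq
  have hne {b : ℕ} (hb : b < k') : P.p (j + 1 + b) ≠ P.p i := fun heq ↦
    hb.ne (eq_of_add_natCast_eq (by lia) (by lia) ((P.inj heq).trans h.add_second.symm))
  obtain ⟨θ, -, hθ₁, -, hθ⟩ := h.exists_smul_edgeVec
  intro x hx
  rcases h.isCap_second.mem_reflexSet_polygon hx with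
    ⟨rfl, hc⟩ | ⟨b, -, hb, hr, rfl⟩ | ⟨-, hc⟩ | ⟨-, hc⟩
  · refine ⟨⟨_, isReflex_iff.2 ?_, rfl⟩, by simpa using hne h.pos_second⟩
    rw [hθ, cross_smul_left] at hc
    rw [add_sub_cancel_right]
    exact neg_of_mul_neg_right hc (sub_pos.2 hθ₁).le
  · exact ⟨⟨_, hr, rfl⟩, hne hb⟩
  · rw [h.add_second] at hc
    exact absurd hstart hc.not_gt
  · rw [h.add_second, hθ, cross_smul_right, cross_swap, ← cross_neg_right, neg_sub] at hc
    exact absurd (mul_pos (sub_pos.2 hθ₁) hapex) hc.not_gt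

end SimplePolygon.IsChord

namespace SimplePolygon

variable {m : ℕ} {P : SimplePolygon m} {i : ZMod m}

lemma reflexSet_subset_vertexSet (P : SimplePolygon m) : P.reflexSet ⊆ P.vertexSet :=
  fun _ ⟨_, _, hx⟩ ↦ hx ▸ mem_range_self _

lemma IsReflex.ncard_lt_ncard [NeZero m] (hi : P.IsReflex i) {s : Set Pt}
    (hs : s ⊆ P.reflexSet \ {P.p i}) : s.ncard < P.reflexSet.ncard :=
  Set.ncard_lt_ncard ((ssubset_iff_of_subset (hs.trans sdiff_subset)).2
    ⟨P.p i, ⟨i, hi, rfl⟩, fun his ↦ (hs his).2 rfl⟩)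
    ((finite_range P.p).subset P.reflexSet_subset_vertexSet)

end SimplePolygon

/-- **Splitting a polygon at a reflex vertex.**
Let `P` be a positively oriented simple polygon and `r = p i` a reflex vertex of `P`.
Then some ray from `r` hits the boundary of `P` first in a point `q` that is not a vertex,
with the open segment `rq` inside the open bounded region of `P`, and the segment `rq`
splits `P` into two simple polygons `P₁, P₂` (their boundaries consist of the segment
`rq` together with the two boundary arcs of `P` between `r` and `q`) such that all
reflex vertices of `P₁` and `P₂` are reflex vertices of `P`, both `P₁` and `P₂` have
strictly fewer reflex vertices than `P`, and `r` and `q` are convex vertices of both. -/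
theorem split_polygon_at_reflex_vertex {m : ℕ} (hm : 3 ≤ m) (P : SimplePolygon m)
    (hor : P.PosOriented) (i : ZMod m) (hi : P.IsReflex i) :
    ∃ q ∈ P.boundary, q ∉ P.vertexSet ∧
      openSegment ℝ (P.p i) q ⊆ P.openRegion ∧
      ∃ (m₁ m₂ : ℕ) (_ : 3 ≤ m₁) (_ : 3 ≤ m₂)
        (P₁ : SimplePolygon m₁) (P₂ : SimplePolygon m₂),
        P₁.PosOriented ∧ P₂.PosOriented ∧
        P₁.boundary ∪ P₂.boundary = P.boundary ∪ segment ℝ (P.p i) q ∧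
        P₁.boundary ∩ P₂.boundary = segment ℝ (P.p i) q ∧
        P₁.vertexSet ∪ P₂.vertexSet = P.vertexSet ∪ {q} ∧
        P₁.vertexSet ∩ P₂.vertexSet = {P.p i, q} ∧
        P₁.reflexSet ⊆ P.reflexSet ∧ P₂.reflexSet ⊆ P.reflexSet ∧
        P₁.reflexSet.ncard < P.reflexSet.ncard ∧
        P₂.reflexSet.ncard < P.reflexSet.ncard ∧
        P.p i ∉ P₁.reflexSet ∧ P.p i ∉ P₂.reflexSet ∧
        q ∉ P₁.reflexSet ∧ q ∉ P₂.reflexSet := by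
  have : NeZero m := ⟨by lia⟩
  have : Fact (1 < m) := ⟨by lia⟩
  obtain ⟨q, j, hq, hchord, hprev, hnext, hapex⟩ := hor.exists_chord hi
  obtain ⟨k, k', h⟩ := SimplePolygon.exists_isChord hq fun x hx ↦ (hchord x hx).1
  have hqP := SimplePolygon.notMem_vertexSet_of_mem_openSegment hq
  obtain ⟨hor₁, hor₂⟩ := h.posOriented_pieces fun x hx ↦ (hchord x hx).2
  have hsub₁ := h.reflexSet_firstPiece_subset hnext hapex
  have hsub₂ := h.reflexSet_secondPiece_subset hprev hapex
  refine ⟨q, P.edge_subset_boundary j h.mem_edge, hqP, fun x hx ↦ ?_, k + 2, k' + 2,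
    Nat.add_le_add_right h.pos_first 2, Nat.add_le_add_right h.pos_second 2,
    h.firstPiece, h.secondPiece, hor₁, hor₂, h.boundary_union, h.boundary_inter,
    h.vertexSet_union, h.vertexSet_inter, hsub₁.trans sdiff_subset, hsub₂.trans sdiff_subset,
    hi.ncard_lt_ncard hsub₁, hi.ncard_lt_ncard hsub₂, fun hr ↦ (hsub₁ hr).2 rfl,
    fun hr ↦ (hsub₂ hr).2 rfl, fun hr ↦ hqP ?_, fun hr ↦ hqP ?_⟩
  · obtain ⟨hx, hw⟩ := hchord x hx
    exact SimplePolygon.mem_openRegion_of_wind_ne_zero hx (hw ▸ one_ne_zero)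
  · exact P.reflexSet_subset_vertexSet (hsub₁ hr).1
  · exact P.reflexSet_subset_vertexSet (hsub₂ hr).1
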